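/- arXiv:2604.22735 — 2 statements merged into one kernel-verified Lean document; each statement's English description precedes it below -/
import Mathlib

section
/- Let Ĝ be a finite connected simple graph in which every vertex has degree exactly 4. For a vertex v of Ĝ, let G_v denote the induced subgraph of Ĝ on the complement of v. Let v and w be vertices of Ĝ such that G_v and G_w are both connected, fix edges e_v ∈ E(G_v) and e_w ∈ E(G_w), and suppose that the functions u ↦ Ψ_{G_v}(x_u)⁻² and u ↦ Ψ_{G_w}(x_u)⁻² are Lebesgue integrable on the respective positive orthants (i.e. both Feynman residues are finite). Then the Feynman residue of G_v equals the Feynman residue of G_w. -/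
open MeasureTheory
open scoped Classical

/-- The Kirchhoff graph polynomial: the sum over spanning trees `T` of `G` of the
product of `x e` over all edges `e` of `G` not in `T`. -/
noncomputable def kirchhoff {V : Type*} [Fintype V] (G : SimpleGraph V)
    (x : G.edgeSet → ℝ) : ℝ :=
  ∑ T ∈ Finset.univ.filter (fun T : SimpleGraph V => T ≤ G ∧ T.IsTree),
    ∏ e : G.edgeSet, if (e : Sym2 V) ∈ T.edgeSet then 1 else x e

/-- The affine chart `x(e₀) = 1`: extend `u : E \ {e₀} → ℝ` to `E → ℝ` by
sending `e₀` to `1`. -/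
noncomputable def chart {V : Type*} [Fintype V] (G : SimpleGraph V) (e₀ : G.edgeSet)
    (u : {e : G.edgeSet // e ≠ e₀} → ℝ) : G.edgeSet → ℝ :=
  fun e => if h : e = e₀ then 1 else u ⟨e, h⟩

/-- The Feynman residue of `G` in the affine chart `x(e₀) = 1`. -/
noncomputable def feynmanResidue {V : Type*} [Fintype V] (G : SimpleGraph V)
    (e₀ : G.edgeSet) : ℝ :=
  ∫ u in {u : {e : G.edgeSet // e ≠ e₀} → ℝ | ∀ e, 0 < u e},
    (kirchhoff G (chart G e₀ u))⁻¹ ^ 2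

section MatrixTree

variable {V : Type*}

/-- A parent function towards the root `r` is rooted if it decreases some rank function. -/
def RootedParent {r : V} (g : {i : V // i ≠ r} → V) : Prop :=
  ∃ d : V → ℕ, ∀ i, d (g i) < d i

theorem exists_invariant_set_of_not_rootedParent {r : V} {g : {i : V // i ≠ r} → V}
    (hg : ¬ RootedParent g) :
    ∃ S : Set V, r ∉ S ∧ S.Nonempty ∧ ∀ i : {i : V // i ≠ r}, (i : V) ∈ S ↔ g i ∈ S := by
  set step : V → V := fun x => if h : x = r then r else g ⟨x, h⟩ with hstep
  have hs : ∀ i : {i : V // i ≠ r}, step i = g i := fun i => by simp [hstep, i.2]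
  have key : ∀ i : {i : V // i ≠ r}, (∃ n, step^[n] (i : V) = r) ↔ ∃ n, step^[n] (g i) = r := by
    intro i
    constructor
    · rintro ⟨n, hn⟩
      cases n with
      | zero => exact absurd hn i.2
      | succ n => exact ⟨n, by rwa [Function.iterate_succ_apply, hs] at hn⟩
    · rintro ⟨n, hn⟩
      exact ⟨n + 1, by rwa [Function.iterate_succ_apply, hs]⟩
  refine ⟨{x | ¬ ∃ n, step^[n] x = r}, fun h => h ⟨0, rfl⟩, ?_, fun i => not_congr (key i)⟩
  by_contra hne
  rw [Set.not_nonempty_iff_eq_empty, Set.eq_empty_iff_forall_notMem] at hne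
  have hall : ∀ x, ∃ n, step^[n] x = r := fun x => by simpa using hne x
  refine hg ⟨fun x => Nat.find (hall x), fun i => ?_⟩
  have h := Nat.find_spec (hall i)
  obtain ⟨m, hm⟩ : ∃ m, Nat.find (hall i) = m + 1 := by
    refine Nat.exists_eq_succ_of_ne_zero fun h0 => i.2 ?_
    rw [h0] at h
    exact h
  rw [hm, Function.iterate_succ_apply, hs] at h
  have := Nat.find_min' (hall (g i)) h
  simp only
  omega

variable [Fintype V]

theorem det_one_sub_parent {r : V} (g : {i : V // i ≠ r} → V) :
    (Matrix.of fun i j : {i : V // i ≠ r} =>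
      (if i = j then (1 : ℝ) else 0) - if g i = j then 1 else 0).det =
      if RootedParent g then 1 else 0 := by
  split_ifs with hg
  · obtain ⟨d, hd⟩ := hg
    rw [Matrix.BlockTriangular.det (b := fun i : {i : V // i ≠ r} => OrderDual.toDual (d i))]
    · refine Finset.prod_eq_one fun a _ => ?_
      suffices h : (Matrix.of fun i j : {i : V // i ≠ r} =>
          (if i = j then (1 : ℝ) else 0) - if g i = j then 1 else 0).toSquareBlock
            (fun i : {i : V // i ≠ r} => OrderDual.toDual (d i)) a = 1 by
        rw [h, Matrix.det_one]
      ext i j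
      have hij : g i ≠ j := fun h => by
        have h1 := hd i
        have h2 := congrArg OrderDual.ofDual (i.2.trans j.2.symm)
        rw [h] at h1
        simp only [OrderDual.ofDual_toDual] at h2
        omega
      simp [Matrix.toSquareBlock, Matrix.toSquareBlockProp, hij, Matrix.one_apply, Subtype.ext_iff]
    · intro i j hij
      have hij : d i < d j := hij
      have h1 : i ≠ j := by rintro rfl; omega
      have h2 : g i ≠ j := fun h => by
        have := hd i
        rw [h] at this
        omega
      simp [h1, h2]
  · obtain ⟨S, hr, ⟨x, hx⟩, hS⟩ := exists_invariant_set_of_not_rootedParent hg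
    refine Matrix.exists_mulVec_eq_zero_iff.1
      ⟨fun i => if (i : V) ∈ S then 1 else 0, fun h => ?_, ?_⟩
    · have := congrFun h ⟨x, fun h => hr (h ▸ hx)⟩
      simp [hx] at this
    · ext i
      simp only [Matrix.mulVec, dotProduct, Matrix.of_apply, sub_mul, Finset.sum_sub_distrib,
        ite_mul, one_mul, zero_mul, Finset.sum_ite_eq, Finset.mem_univ, if_true, Pi.zero_apply]
      by_cases h : g i = r
      · have h1 : (i : V) ∉ S := by rw [hS, h]; exact hr
        rw [if_neg h1, Finset.sum_eq_zero, sub_zero]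
        intro j _
        rw [if_neg]
        rw [h]
        exact j.2.symm
      · have h2 := hS i
        rw [Finset.sum_eq_single ⟨g i, h⟩]
        · simp [h2]
        · intro j _ hj
          rw [if_neg]
          exact fun hij => hj (Subtype.ext hij.symm)
        · simp

/-- The Laplacian of the weights `c`, with the row and the column of the root `r` removed. -/
noncomputable def reducedLaplacian (c : V → V → ℝ) (r : V) :
    Matrix {i : V // i ≠ r} {i : V // i ≠ r} ℝ :=
  Matrix.of fun i j => (if i = j then ∑ k, c i k else 0) - c i j

theorem det_reducedLaplacian (c : V → V → ℝ) (r : V) :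
    (reducedLaplacian c r).det =
      ∑ g ∈ Finset.univ.filter (fun g : {i : V // i ≠ r} → V => RootedParent g),
        ∏ i : {i : V // i ≠ r}, c i (g i) := by
  have h1 : reducedLaplacian c r = fun i : {i : V // i ≠ r} => ∑ k : V, c i k •
      (fun j : {i : V // i ≠ r} => (if i = j then (1 : ℝ) else 0) - if k = j then 1 else 0) := by
    ext i j
    simp only [reducedLaplacian, Matrix.of_apply, Finset.sum_apply, Pi.smul_apply, smul_eq_mul,
      mul_sub, Finset.sum_sub_distrib, mul_ite, mul_one, mul_zero, Finset.sum_ite_eq',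
      Finset.mem_univ, if_true]
    congr 1
    split_ifs <;> simp
  have h2 := (Matrix.detRowAlternating (n := {i : V // i ≠ r}) (R := ℝ)).toMultilinearMap.map_sum
    (fun (i : {i : V // i ≠ r}) (k : V) => c i k •
      (fun j : {i : V // i ≠ r} => (if i = j then (1 : ℝ) else 0) - if k = j then 1 else 0))
  rw [← h1] at h2
  refine Eq.trans h2 ?_
  rw [Finset.sum_filter]
  refine Finset.sum_congr rfl fun g _ => ?_
  refine ((Matrix.detRowAlternating (n := {i : V // i ≠ r})
    (R := ℝ)).toMultilinearMap.map_smul_univ (fun i : {i : V // i ≠ r} => c i (g i)) _).trans ?_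
  refine (congrArg (fun t => (∏ i : {i : V // i ≠ r}, c i (g i)) • t)
    (det_one_sub_parent g)).trans ?_
  simp

end MatrixTree

section SpanningTrees

variable {V : Type*}

/-- The graph joining every vertex other than the root to its parent. -/
def parentGraph {r : V} (g : {i : V // i ≠ r} → V) : SimpleGraph V :=
  SimpleGraph.fromEdgeSet (Set.range fun i : {i : V // i ≠ r} => s((i : V), g i))

namespace RootedParent

variable {r : V} {g : {i : V // i ≠ r} → V}

theorem apply_ne (hg : RootedParent g) (i : {i : V // i ≠ r}) : g i ≠ i := by
  obtain ⟨d, hd⟩ := hg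
  intro h
  have := hd i
  rw [h] at this
  omega

theorem apply_apply_ne (hg : RootedParent g) (i : {i : V // i ≠ r}) (h : g i ≠ r) :
    g ⟨g i, h⟩ ≠ i := by
  obtain ⟨d, hd⟩ := hg
  intro h'
  have h1 := hd i
  have h2 := hd ⟨g i, h⟩
  rw [h'] at h2
  simp only at h2
  omega

theorem edgeSet_parentGraph (hg : RootedParent g) :
    (parentGraph g).edgeSet = Set.range fun i : {i : V // i ≠ r} => s((i : V), g i) := by
  rw [parentGraph, SimpleGraph.edgeSet_fromEdgeSet, sdiff_eq_left, Set.disjoint_left]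
  rintro _ ⟨i, rfl⟩ h
  exact hg.apply_ne i (by simpa [eq_comm] using h)

theorem edge_injective (hg : RootedParent g) :
    Function.Injective fun i : {i : V // i ≠ r} => s((i : V), g i) := by
  intro i j h
  rcases Sym2.eq_iff.1 h with ⟨h1, _⟩ | ⟨h1, h2⟩
  · exact Subtype.ext h1
  · have h3 : g i ≠ r := by rw [h2]; exact j.2
    refine absurd ?_ (hg.apply_apply_ne i h3)
    rw [h1]
    exact congrArg g (Subtype.ext h2)

theorem connected_parentGraph (hg : RootedParent g) : (parentGraph g).Connected := by
  have hadj : ∀ i : {i : V // i ≠ r}, (parentGraph g).Adj i (g i) := fun i => by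
    rw [← SimpleGraph.mem_edgeSet, hg.edgeSet_parentGraph]
    exact ⟨i, rfl⟩
  obtain ⟨d, hd⟩ := hg
  have key : ∀ n x, d x = n → (parentGraph g).Reachable x r := by
    intro n
    induction n using Nat.strong_induction_on with
    | _ n ih =>
      intro x hx
      by_cases h : x = r
      · rw [h]
      · have h1 := hd ⟨x, h⟩
        exact (hadj ⟨x, h⟩).reachable.trans (ih _ (hx ▸ h1) _ rfl)
  rw [SimpleGraph.connected_iff_exists_forall_reachable]
  exact ⟨r, fun x => (key _ x rfl).symm⟩

theorem isTree_parentGraph [Fintype V] (hg : RootedParent g) : (parentGraph g).IsTree := by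
  rw [SimpleGraph.isTree_iff_connected_and_card]
  refine ⟨hg.connected_parentGraph, ?_⟩
  rw [hg.edgeSet_parentGraph, Nat.card_range_of_injective hg.edge_injective,
    Nat.card_eq_fintype_card, Nat.card_eq_fintype_card, Fintype.card_subtype_compl,
    Fintype.card_subtype_eq]
  have : 0 < Fintype.card V := Fintype.card_pos_iff.2 ⟨r⟩
  omega

theorem eq_of_parentGraph_eq {h : {i : V // i ≠ r} → V} (hg : RootedParent g)
    (hh : RootedParent h) (hgh : parentGraph g = parentGraph h) : g = h := by
  have hedge : ∀ i : {i : V // i ≠ r}, ∃ j : {i : V // i ≠ r}, s((j : V), h j) = s((i : V), g i) :=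
    fun i => by
      have : s((i : V), g i) ∈ (parentGraph h).edgeSet := by
        rw [← hgh, hg.edgeSet_parentGraph]
        exact ⟨i, rfl⟩
      rwa [hh.edgeSet_parentGraph] at this
  have step : ∀ i : {i : V // i ≠ r}, h i = g i ∨ ∃ hi : g i ≠ r, h ⟨g i, hi⟩ = i := by
    intro i
    obtain ⟨j, hj⟩ := hedge i
    rcases Sym2.eq_iff.1 hj with ⟨h1, h2⟩ | ⟨h1, h2⟩
    · left
      rw [← h2, Subtype.ext h1]
    · right
      refine ⟨h1 ▸ j.2, ?_⟩
      rw [← h2]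
      exact congrArg h (Subtype.ext h1.symm)
  obtain ⟨d, hd⟩ := hg
  have key : ∀ n, ∀ i : {i : V // i ≠ r}, d i = n → ∀ hi : g i ≠ r, h ⟨g i, hi⟩ ≠ i := by
    intro n
    induction n using Nat.strong_induction_on with
    | _ n ih =>
      intro i hin hi hcontra
      have hlt := hd i
      rcases step ⟨g i, hi⟩ with h1 | ⟨hi', h1⟩
      · rw [hcontra] at h1
        exact RootedParent.apply_apply_ne ⟨d, hd⟩ i hi h1.symm
      · exact ih (d (g i)) (hin ▸ hlt) ⟨g i, hi⟩ rfl hi' h1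
  funext i
  rcases step i with h1 | ⟨hi, h1⟩
  · exact h1.symm
  · exact absurd h1 (key _ i rfl hi)

end RootedParent

theorem SimpleGraph.IsTree.exists_parentGraph_eq [Fintype V] {T : SimpleGraph V} (hT : T.IsTree)
    (r : V) : ∃ g : {i : V // i ≠ r} → V, RootedParent g ∧ parentGraph g = T := by
  have hex : ∀ i : {i : V // i ≠ r}, ∃ j, T.Adj i j ∧ T.dist r j < T.dist r i := by
    rintro ⟨i, hi⟩
    obtain ⟨p, hp⟩ := hT.connected.exists_walk_length_eq_dist i r
    cases p with
    | nil => exact absurd rfl hi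
    | cons hadj q =>
      refine ⟨_, hadj, ?_⟩
      have h1 := SimpleGraph.dist_le q
      rw [SimpleGraph.Walk.length_cons] at hp
      change T.dist r _ < T.dist r i
      rw [SimpleGraph.dist_comm, SimpleGraph.dist_comm (u := r)]
      omega
  choose g hg1 hg2 using hex
  have hg : RootedParent g := ⟨T.dist r, hg2⟩
  refine ⟨g, hg, ?_⟩
  have hle : parentGraph g ≤ T := by
    rw [← SimpleGraph.edgeSet_subset_edgeSet, hg.edgeSet_parentGraph]
    rintro _ ⟨i, rfl⟩
    exact hg1 i
  exact le_antisymm hle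
    ((SimpleGraph.isTree_iff_minimal_connected.1 hT).2 hg.connected_parentGraph hle)

/-- Edge weights extended by zero to all unordered pairs. -/
noncomputable def extendWeight (G : SimpleGraph V) (a : G.edgeSet → ℝ) (e : Sym2 V) : ℝ :=
  if h : e ∈ G.edgeSet then a ⟨e, h⟩ else 0

theorem extendWeight_of_not_adj (G : SimpleGraph V) (a : G.edgeSet → ℝ) {i j : V}
    (h : ¬ G.Adj i j) : extendWeight G a s(i, j) = 0 := by
  simp [extendWeight, h]

variable [Fintype V]

theorem sum_rootedParent_prod (w : Sym2 V → ℝ) (r : V) :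
    ∑ g ∈ Finset.univ.filter (fun g : {i : V // i ≠ r} → V => RootedParent g),
        ∏ i : {i : V // i ≠ r}, w s((i : V), g i) =
      ∑ T ∈ Finset.univ.filter (fun T : SimpleGraph V => T.IsTree), ∏ e ∈ T.edgeFinset, w e := by
  refine Finset.sum_bij (fun g _ => parentGraph g) ?_ ?_ ?_ ?_
  · intro g hg
    simp only [Finset.mem_filter, Finset.mem_univ, true_and] at hg ⊢
    exact hg.isTree_parentGraph
  · intro g hg h hh heq
    simp only [Finset.mem_filter, Finset.mem_univ, true_and] at hg hh
    exact hg.eq_of_parentGraph_eq hh heq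
  · intro T hT
    simp only [Finset.mem_filter, Finset.mem_univ, true_and] at hT
    obtain ⟨g, hg, hgT⟩ := hT.exists_parentGraph_eq r
    exact ⟨g, by simpa using hg, hgT⟩
  · intro g hg
    simp only [Finset.mem_filter, Finset.mem_univ, true_and] at hg
    refine Finset.prod_bij (fun i _ => s((i : V), g i)) ?_ ?_ ?_ ?_
    · intro i _
      rw [SimpleGraph.mem_edgeFinset, hg.edgeSet_parentGraph]
      exact ⟨i, rfl⟩
    · intro i _ j _ h
      exact hg.edge_injective h
    · intro e he
      rw [SimpleGraph.mem_edgeFinset, hg.edgeSet_parentGraph] at he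
      obtain ⟨i, rfl⟩ := he
      exact ⟨i, Finset.mem_univ _, rfl⟩
    · intro i _
      rfl

/-- The weighted Laplacian of `G` with the row and the column of `r` removed. -/
noncomputable def graphLaplacian (G : SimpleGraph V) (r : V) (a : G.edgeSet → ℝ) :
    Matrix {i : V // i ≠ r} {i : V // i ≠ r} ℝ :=
  reducedLaplacian (fun i j => extendWeight G a s(i, j)) r

/-- The weighted matrix-tree theorem. -/
theorem det_graphLaplacian (G : SimpleGraph V) (r : V) (a : G.edgeSet → ℝ) :
    (graphLaplacian G r a).det =
      ∑ T ∈ Finset.univ.filter (fun T : SimpleGraph V => T ≤ G ∧ T.IsTree),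
        ∏ e : G.edgeSet, if (e : Sym2 V) ∈ T.edgeSet then a e else 1 := by
  rw [graphLaplacian, det_reducedLaplacian, sum_rootedParent_prod (extendWeight G a) r]
  symm
  have hsub : Finset.univ.filter (fun T : SimpleGraph V => T ≤ G ∧ T.IsTree) ⊆
      Finset.univ.filter (fun T : SimpleGraph V => T.IsTree) := by
    intro T hT
    simp only [Finset.mem_filter, Finset.mem_univ, true_and] at hT ⊢
    exact hT.2
  rw [← Finset.sum_subset hsub]
  · refine Finset.sum_congr rfl fun T hT => ?_
    simp only [Finset.mem_filter, Finset.mem_univ, true_and] at hT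
    rw [Finset.prod_ite, Finset.prod_const_one, mul_one]
    refine Finset.prod_bij (fun e _ => (e : Sym2 V)) ?_ ?_ ?_ ?_
    · intro e he
      simpa using he
    · intro e _ f _ h
      exact Subtype.ext h
    · intro e he
      rw [SimpleGraph.mem_edgeFinset] at he
      exact ⟨⟨e, SimpleGraph.edgeSet_subset_edgeSet.2 hT.1 he⟩, by simpa using he, rfl⟩
    · intro e _
      simp [extendWeight]
  · intro T hT hT'
    simp only [Finset.mem_filter, Finset.mem_univ, true_and] at hT hT'
    have : ¬ T ≤ G := fun h => hT' ⟨h, hT⟩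
    rw [← SimpleGraph.edgeSet_subset_edgeSet, Set.not_subset] at this
    obtain ⟨e, he, he'⟩ := this
    exact Finset.prod_eq_zero (SimpleGraph.mem_edgeFinset.2 he) (by simp [extendWeight, he'])

theorem kirchhoff_eq_prod_mul_det (G : SimpleGraph V) (r : V) (x : G.edgeSet → ℝ)
    (hx : ∀ e, x e ≠ 0) :
    kirchhoff G x = (∏ e, x e) * (graphLaplacian G r fun e => (x e)⁻¹).det := by
  rw [det_graphLaplacian, kirchhoff, Finset.mul_sum]
  refine Finset.sum_congr rfl fun T _ => ?_
  rw [← Finset.prod_mul_distrib]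
  refine Finset.prod_congr rfl fun e _ => ?_
  split_ifs <;> simp [hx e]

end SpanningTrees

section DirichletForm

variable {V : Type*} [Fintype V]

@[to_additive]
theorem SimpleGraph.prod_dart_edge {M : Type*} [CommMonoid M] (G : SimpleGraph V)
    (F : Sym2 V → M) : ∏ d : G.Dart, F d.edge = (∏ e : G.edgeSet, F e) ^ 2 := by
  rw [← Finset.prod_fiberwise_of_maps_to (s := Finset.univ) (t := G.edgeFinset)
    (g := SimpleGraph.Dart.edge) (fun d _ => SimpleGraph.mem_edgeFinset.2 d.edge_mem),
    ← Finset.prod_pow]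
  have h : ∀ e ∈ G.edgeFinset,
      ∏ d ∈ Finset.univ.filter (fun d : G.Dart => d.edge = e), F d.edge = F e ^ 2 := by
    intro e he
    rw [Finset.prod_congr rfl (fun d hd => by rw [(Finset.mem_filter.1 hd).2] :
      ∀ d ∈ Finset.univ.filter (fun d : G.Dart => d.edge = e), F d.edge = F e),
      Finset.prod_const]
    congr 1
    convert G.dart_edge_fiber_card e (SimpleGraph.mem_edgeFinset.1 he)
  rw [Finset.prod_congr rfl h]
  exact Finset.prod_subtype G.edgeFinset (p := (· ∈ G.edgeSet))
    (fun e => SimpleGraph.mem_edgeFinset) (fun e => F e ^ 2)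

@[to_additive]
theorem SimpleGraph.prod_prod_adj {M : Type*} [CommMonoid M] (G : SimpleGraph V)
    (F : Sym2 V → M) :
    ∏ i, ∏ j, (if G.Adj i j then F s(i, j) else 1) = (∏ e : G.edgeSet, F e) ^ 2 := by
  rw [← G.prod_dart_edge, ← Fintype.prod_prod_type', ← Finset.prod_filter]
  symm
  refine Finset.prod_bij (fun d _ => d.toProd) ?_ ?_ ?_ ?_
  · intro d _
    simp
  · intro d _ d' _ h
    exact SimpleGraph.Dart.ext _ _ h
  · intro p hp
    exact ⟨⟨p, by simpa using hp⟩, Finset.mem_univ _, rfl⟩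
  · intro d _
    rfl

variable {E : Type*} [NormedAddCommGroup E]

/-- The squared length of an edge, for vertices placed in a normed space. -/
def edgeNormSq {U : Type*} (y : U → E) : Sym2 U → ℝ :=
  Sym2.lift ⟨fun i j => ‖y i - y j‖ ^ 2, fun i j => by simp only [norm_sub_rev]⟩

/-- Extend a family of positions by placing the root at the origin. -/
noncomputable def extendZero {U : Type*} (r : U) (x : {i : U // i ≠ r} → E) (i : U) : E :=
  if h : i = r then 0 else x ⟨i, h⟩

/-- The weighted sum of the squared lengths of the edges of `G`. -/
noncomputable def dirichletForm (G : SimpleGraph V) (a : G.edgeSet → ℝ) (y : V → E) : ℝ :=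
  ∑ e, a e * edgeNormSq y e

theorem edgeNormSq_nonneg {U : Type*} (y : U → E) (e : Sym2 U) : 0 ≤ edgeNormSq y e := by
  induction e with
  | _ i j => exact sq_nonneg _

theorem dirichletForm_nonneg (G : SimpleGraph V) {a : G.edgeSet → ℝ} (ha : ∀ e, 0 ≤ a e)
    (y : V → E) : 0 ≤ dirichletForm G a y :=
  Finset.sum_nonneg fun e _ => mul_nonneg (ha e) (edgeNormSq_nonneg y e)

theorem sum_extendZero {M : Type*} [AddCommMonoid M] (r : V) (x : {i : V // i ≠ r} → E)
    (f : V → E → M) (hf : f r 0 = 0) :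
    ∑ i, f i (extendZero r x i) = ∑ i : {i : V // i ≠ r}, f i (x i) := by
  rw [Fintype.sum_eq_add_sum_subtype_ne _ r]
  have h : extendZero r x r = 0 := by simp [extendZero]
  rw [h, hf, zero_add]
  refine Finset.sum_congr rfl fun i _ => ?_
  simp [extendZero, i.2]

variable [InnerProductSpace ℝ E]

theorem dirichletForm_eq_sum (G : SimpleGraph V) (a : G.edgeSet → ℝ) (y : V → E) :
    dirichletForm G a y =
      ∑ i, ∑ j, extendWeight G a s(i, j) * (‖y i‖ ^ 2 - inner ℝ (y i) (y j)) := by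
  have h1 := G.sum_sum_adj (fun e => extendWeight G a e * edgeNormSq y e)
  have h2 : ∑ e : G.edgeSet, extendWeight G a e * edgeNormSq y e = dirichletForm G a y := by
    simp [dirichletForm, extendWeight]
  rw [h2] at h1
  have h3 : ∀ i j, (if G.Adj i j then extendWeight G a s(i, j) * edgeNormSq y s(i, j) else 0) =
      extendWeight G a s(i, j) * (‖y i‖ ^ 2 - inner ℝ (y i) (y j)) +
      extendWeight G a s(j, i) * (‖y j‖ ^ 2 - inner ℝ (y j) (y i)) := by
    intro i j
    split_ifs with h
    · have : edgeNormSq y s(i, j) = ‖y i - y j‖ ^ 2 := rfl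
      rw [this, norm_sub_sq_real, Sym2.eq_swap (a := j), real_inner_comm (y i) (y j)]
      ring
    · rw [extendWeight_of_not_adj G a h, extendWeight_of_not_adj G a fun h' => h h'.symm]
      simp
  simp only [h3, Finset.sum_add_distrib, two_nsmul] at h1
  have h4 := Finset.sum_comm (s := Finset.univ) (t := Finset.univ)
    (f := fun j i => extendWeight G a s(j, i) * (‖y j‖ ^ 2 - inner ℝ (y j) (y i)))
  linarith

theorem dirichletForm_extendZero (G : SimpleGraph V) (a : G.edgeSet → ℝ) (r : V)
    (x : {i : V // i ≠ r} → E) :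
    dirichletForm G a (extendZero r x) =
      ∑ i, ∑ j, graphLaplacian G r a i j * inner ℝ (x i) (x j) := by
  rw [dirichletForm_eq_sum]
  simp only [mul_sub, Finset.sum_sub_distrib]
  rw [sum_extendZero r x (fun i v => ∑ j, extendWeight G a s(i, j) * ‖v‖ ^ 2) (by simp),
    sum_extendZero r x
      (fun i v => ∑ j, extendWeight G a s(i, j) * inner ℝ v (extendZero r x j)) (by simp),
    ← Finset.sum_sub_distrib]
  refine Finset.sum_congr rfl fun i _ => ?_
  rw [sum_extendZero r x (fun j v => extendWeight G a s((i : V), j) * inner ℝ (x i) v) (by simp)]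
  simp only [graphLaplacian, reducedLaplacian, Matrix.of_apply, sub_mul, Finset.sum_sub_distrib,
    ite_mul, zero_mul, Finset.sum_ite_eq, Finset.mem_univ, if_true, real_inner_self_eq_norm_sq,
    Finset.sum_mul]

theorem isSymm_graphLaplacian (G : SimpleGraph V) (a : G.edgeSet → ℝ) (r : V) :
    (graphLaplacian G r a).IsSymm := by
  ext i j
  simp only [graphLaplacian, reducedLaplacian, Matrix.transpose_apply, Matrix.of_apply]
  rw [Sym2.eq_swap]
  congr 1
  by_cases h : i = j
  · subst h; rfl
  · rw [if_neg h, if_neg (Ne.symm h)]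

theorem posDef_graphLaplacian {G : SimpleGraph V} (hG : G.Connected) {a : G.edgeSet → ℝ}
    (ha : ∀ e, 0 < a e) (r : V) : (graphLaplacian G r a).PosDef := by
  refine Matrix.PosDef.of_dotProduct_mulVec_pos ?_ fun x hx => ?_
  · rw [Matrix.IsHermitian, Matrix.conjTranspose_eq_transpose_of_trivial]
    exact isSymm_graphLaplacian G a r
  · have h1 : star x ⬝ᵥ (graphLaplacian G r a).mulVec x = dirichletForm G a (extendZero r x) := by
      rw [dirichletForm_extendZero]
      simp only [dotProduct, Matrix.mulVec, Finset.mul_sum]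
      refine Finset.sum_congr rfl fun i _ => Finset.sum_congr rfl fun j _ => ?_
      simp
      ring
    rw [h1]
    refine lt_of_le_of_ne (dirichletForm_nonneg G (fun e => (ha e).le) _) fun h0 => hx ?_
    have h2 := (Finset.sum_eq_zero_iff_of_nonneg
      fun e _ => mul_nonneg (ha e).le (edgeNormSq_nonneg (extendZero r x) e)).1 h0.symm
    have h3 : ∀ i j, G.Adj i j → extendZero r x i = extendZero r x j := by
      intro i j hij
      have h4 := h2 ⟨s(i, j), hij⟩ (Finset.mem_univ _)
      have h5 : edgeNormSq (extendZero r x) s(i, j) = 0 := by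
        simpa [(ha _).ne'] using h4
      have h6 : ‖extendZero r x i - extendZero r x j‖ ^ 2 = 0 := h5
      rwa [sq_eq_zero_iff, norm_eq_zero, sub_eq_zero] at h6
    have h4 : ∀ i, extendZero r x i = extendZero r x r := by
      intro i
      have key : ∀ i j, G.Walk i j → extendZero r x i = extendZero r x j := by
        intro i j p
        induction p with
        | nil => rfl
        | cons h _ ih => exact (h3 _ _ h).trans ih
      obtain ⟨p⟩ := hG.preconnected i r
      exact key i r p
    funext i
    have h5 := h4 i
    simpa [extendZero, i.2] using h5

end DirichletForm

section ProductMeasures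

open scoped ENNReal NNReal

variable {ι : Type*} [Fintype ι]

theorem lintegral_pi_prod {X : ι → Type*} [∀ i, MeasurableSpace (X i)] (μ : ∀ i, Measure (X i))
    [∀ i, SigmaFinite (μ i)] {f : ∀ i, X i → ℝ≥0∞} (hf : ∀ i, Measurable (f i)) :
    ∫⁻ x, ∏ i, f i (x i) ∂Measure.pi μ = ∏ i, ∫⁻ t, f i t ∂μ i := by
  have hmeas : Measurable fun x : ∀ i, X i => ∏ i, f i (x i) :=
    Finset.measurable_fun_prod _ fun i _ => (hf i).comp (measurable_pi_apply i)
  have key : ∀ (s : Finset ι) (x : ∀ i, X i), lmarginal μ s (fun x => ∏ i, f i (x i)) x =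
      (∏ i ∈ s, ∫⁻ t, f i t ∂μ i) * ∏ i ∈ sᶜ, f i (x i) := by
    intro s
    induction s using Finset.induction_on with
    | empty => intro x; simp
    | insert i s hi ih =>
      intro x
      rw [lmarginal_insert _ hmeas hi]
      simp only [ih]
      have hc : sᶜ = insert i (insert i s)ᶜ := by
        ext j
        by_cases hj : j = i <;> simp [hj, hi]
      have hni : i ∉ (insert i s)ᶜ := by simp
      have h1 : ∀ t, ∏ j ∈ sᶜ, f j (Function.update x i t j) =
          f i t * ∏ j ∈ (insert i s)ᶜ, f j (x j) := by
        intro t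
        rw [hc, Finset.prod_insert hni, Function.update_self]
        congr 1
        refine Finset.prod_congr rfl fun j hj => ?_
        rw [Function.update_of_ne]
        rintro rfl
        exact hni hj
      simp only [h1]
      rw [lintegral_const_mul _ ((hf i).mul_const _), lintegral_mul_const _ (hf i),
        Finset.prod_insert hi]
      ring
  by_cases hne : Nonempty (∀ i, X i)
  · obtain ⟨x⟩ := hne
    rw [lintegral_eq_lmarginal_univ x, key]
    simp
  · have hX : ∃ i, IsEmpty (X i) := by simpa using hne
    obtain ⟨i, hi⟩ := hX
    rw [not_nonempty_iff] at hne
    rw [Measure.eq_zero_of_isEmpty (Measure.pi μ), lintegral_zero_measure]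
    exact (Finset.prod_eq_zero (Finset.mem_univ i)
      (by rw [Measure.eq_zero_of_isEmpty (μ i), lintegral_zero_measure])).symm

variable {X : Type*} [MeasurableSpace X]

theorem lintegral_pi_comp_of_map_withDensity {μ : Measure X} [SigmaFinite μ] {ρ : X → ℝ≥0}
    (hρ : Measurable ρ) {T : X → X} (hT : Measurable T)
    (h : (μ.withDensity fun x => (ρ x : ℝ≥0∞)).map T = μ) {F : (ι → X) → ℝ≥0∞}
    (hF : Measurable F) :
    ∫⁻ x, F x ∂Measure.pi (fun _ => μ) =
      ∫⁻ x, (∏ i, (ρ (x i) : ℝ≥0∞)) * F (fun i => T (x i)) ∂Measure.pi (fun _ => μ) := by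
  have hρ' : Measurable fun x => (ρ x : ℝ≥0∞) := hρ.coe_nnreal_ennreal
  have hpi : Measure.pi (fun _ : ι => μ.withDensity fun x => (ρ x : ℝ≥0∞)) =
      (Measure.pi fun _ : ι => μ).withDensity fun x => ∏ i, (ρ (x i) : ℝ≥0∞) := by
    refine Measure.pi_eq fun s hs => ?_
    rw [withDensity_apply _ (MeasurableSet.univ_pi hs), Measure.restrict_pi_pi,
      lintegral_pi_prod _ fun _ => hρ']
    exact Finset.prod_congr rfl fun i _ => (withDensity_apply _ (hs i)).symm
  have hmp : MeasurePreserving T (μ.withDensity fun x => (ρ x : ℝ≥0∞)) μ := ⟨hT, h⟩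
  have hmp' := measurePreserving_pi (fun _ : ι => μ.withDensity fun x => (ρ x : ℝ≥0∞))
    (fun _ => μ) (fun _ => hmp)
  rw [← hmp'.lintegral_comp hF, hpi, lintegral_withDensity_eq_lintegral_mul]
  · rfl
  · exact Finset.measurable_fun_prod _ fun i _ => hρ'.comp (measurable_pi_apply i)
  · exact hF.comp hmp'.measurable

end ProductMeasures

section ChangeOfVariables

open scoped ENNReal NNReal

theorem lintegral_eq_mul_lintegral_smul {E : Type*} [NormedAddCommGroup E] [NormedSpace ℝ E]
    [MeasurableSpace E] [BorelSpace E] [FiniteDimensional ℝ E] (μ : Measure E)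
    [μ.IsAddHaarMeasure] {r : ℝ} (hr : 0 < r) {f : E → ℝ≥0∞} (hf : Measurable f) :
    ∫⁻ x, f x ∂μ = ENNReal.ofReal (r ^ Module.finrank ℝ E) * ∫⁻ x, f (r • x) ∂μ := by
  have h := lintegral_map (μ := μ) hf (measurable_const_smul r)
  have hpos : 0 < r ^ Module.finrank ℝ E := pow_pos hr _
  rw [Measure.map_addHaar_smul μ hr.ne', lintegral_smul_measure, smul_eq_mul] at h
  rw [← h, ← mul_assoc, ← ENNReal.ofReal_mul hpos.le, abs_of_pos (inv_pos.2 hpos),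
    mul_inv_cancel₀ hpos.ne', ENNReal.ofReal_one, one_mul]

/-- Lebesgue measure on the positive half-line. -/
noncomputable def volumePos : Measure ℝ := volume.restrict (Set.Ioi 0)

instance : SigmaFinite volumePos := by unfold volumePos; infer_instance

theorem ae_volumePos : ∀ᵐ t ∂volumePos, 0 < t := ae_restrict_mem measurableSet_Ioi

theorem pi_volumePos {ι : Type*} [Fintype ι] :
    Measure.pi (fun _ : ι => volumePos) = volume.restrict {u : ι → ℝ | ∀ i, 0 < u i} := by
  have : {u : ι → ℝ | ∀ i, 0 < u i} = Set.univ.pi fun _ => Set.Ioi 0 := by ext; simp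
  rw [this, volume_pi, Measure.restrict_pi_pi]
  rfl

theorem measurableSet_orthant {ι : Type*} [Fintype ι] :
    MeasurableSet {u : ι → ℝ | ∀ i, 0 < u i} := by
  have : {u : ι → ℝ | ∀ i, 0 < u i} = Set.univ.pi fun _ => Set.Ioi 0 := by ext; simp
  rw [this]
  exact MeasurableSet.univ_pi fun _ => measurableSet_Ioi

theorem ae_pi_volumePos {ι : Type*} [Fintype ι] :
    ∀ᵐ u ∂Measure.pi (fun _ : ι => volumePos), ∀ i, 0 < u i := by
  rw [pi_volumePos]
  exact ae_restrict_mem measurableSet_orthant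

theorem lintegral_pi_volumePos_smul {ι : Type*} [Fintype ι] {r : ℝ} (hr : 0 < r)
    {f : (ι → ℝ) → ℝ≥0∞} (hf : Measurable f) :
    ∫⁻ x, f x ∂Measure.pi (fun _ : ι => volumePos) =
      ENNReal.ofReal (r ^ Fintype.card ι) *
        ∫⁻ x, f (r • x) ∂Measure.pi (fun _ : ι => volumePos) := by
  rw [pi_volumePos, ← lintegral_indicator measurableSet_orthant,
    ← lintegral_indicator measurableSet_orthant,
    lintegral_eq_mul_lintegral_smul volume hr (hf.indicator measurableSet_orthant),
    Module.finrank_fintype_fun_eq_card]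
  congr 1
  refine lintegral_congr fun x => ?_
  simp [Set.indicator_apply, hr]

theorem map_inv_volumePos :
    (volumePos.withDensity fun t => (((‖t‖₊ ^ 2)⁻¹ : ℝ≥0) : ℝ≥0∞)).map (fun t => t⁻¹) =
      volumePos := by
  refine Measure.ext_of_lintegral _ fun f hf => ?_
  have himg : (fun t : ℝ => t⁻¹) '' Set.Ioi 0 = Set.Ioi 0 := by
    ext t
    simp
  have h := lintegral_image_eq_lintegral_abs_deriv_mul (s := Set.Ioi (0 : ℝ))
    (f := fun t => t⁻¹) (f' := fun t => -(t ^ 2)⁻¹) measurableSet_Ioi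
    (fun t ht => (hasDerivAt_inv (ne_of_gt ht)).hasDerivWithinAt) inv_injective.injOn f
  rw [himg] at h
  rw [lintegral_map hf measurable_inv, lintegral_withDensity_eq_lintegral_mul _ (by fun_prop)
    (g := fun t => f t⁻¹) (hf.comp measurable_inv), volumePos, h]
  refine setLIntegral_congr_fun measurableSet_Ioi fun t ht => ?_
  simp only [Pi.mul_apply]
  congr 1
  rw [abs_neg, abs_inv, abs_pow, ENNReal.ofReal, Real.toNNReal_inv,
    Real.toNNReal_pow (abs_nonneg t),
    Real.toNNReal_abs]
  rfl

/-- Four-dimensional Euclidean space. -/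
abbrev FourSpace : Type := EuclideanSpace ℝ (Fin 4)

/-- Inversion in the unit sphere. -/
noncomputable def unitInversion : FourSpace → FourSpace := EuclideanGeometry.inversion 0 1

theorem measurable_unitInversion : Measurable unitInversion := by
  unfold unitInversion EuclideanGeometry.inversion
  fun_prop

theorem map_unitInversion_volume :
    ((volume : Measure FourSpace).withDensity
      fun x => (((‖x‖₊ ^ 8)⁻¹ : ℝ≥0) : ℝ≥0∞)).map unitInversion = volume := by
  refine Measure.ext_of_lintegral _ fun f hf => ?_
  have hinv : Function.Involutive unitInversion :=
    EuclideanGeometry.inversion_involutive 0 one_ne_zero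
  have himg : unitInversion '' {0}ᶜ = {0}ᶜ := by
    rw [Set.image_compl_eq hinv.bijective, Set.image_singleton, unitInversion,
      EuclideanGeometry.inversion_self]
  have h := lintegral_image_eq_lintegral_abs_det_fderiv_mul (volume : Measure FourSpace)
    (measurableSet_singleton (0 : FourSpace)).compl
    (fun x hx => (EuclideanGeometry.hasFDerivAt_inversion (R := 1) hx).hasFDerivWithinAt)
    hinv.injective.injOn f
  change ∫⁻ x in unitInversion '' {0}ᶜ, f x = ∫⁻ x in {0}ᶜ, _ * f (unitInversion x) at h
  have hae : (volume : Measure FourSpace).restrict {0}ᶜ = volume := restrict_compl_singleton 0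
  rw [himg, hae] at h
  rw [lintegral_map hf measurable_unitInversion,
    lintegral_withDensity_eq_lintegral_mul _ (by fun_prop)
    (g := fun x => f (unitInversion x)) (hf.comp measurable_unitInversion), h]
  refine lintegral_congr fun x => ?_
  simp only [Pi.mul_apply]
  congr 1
  rw [ENNReal.ofReal]
  congr 1
  rw [ContinuousLinearMap.det, ContinuousLinearMap.toLinearMap_smul, LinearMap.det_smul]
  have hd := (ℝ ∙ (x - 0))ᗮ.det_reflection
  have hd' : |LinearMap.det (((ℝ ∙ (x - 0))ᗮ.reflection : FourSpace →L[ℝ] FourSpace) :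
      FourSpace →ₗ[ℝ] FourSpace)| = 1 := by
    refine (congrArg _ hd).trans ?_
    simp
  rw [abs_mul, hd', mul_one, dist_zero_right, finrank_euclideanSpace_fin]
  ext
  rw [Real.coe_toNNReal _ (abs_nonneg _), abs_of_nonneg (by positivity)]
  push_cast
  rw [← pow_mul, one_div, inv_pow]

theorem setLIntegral_exp_neg_mul {s : ℝ} (hs : 0 ≤ s) :
    ∫⁻ t, ENNReal.ofReal (Real.exp (-(t * s))) ∂volumePos = (ENNReal.ofReal s)⁻¹ := by
  rcases hs.eq_or_lt with rfl | hs
  · simp [volumePos]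
  · have h1 : IntegrableOn (fun t : ℝ => Real.exp (-(t * s))) (Set.Ioi 0) := by
      refine (integrableOn_exp_mul_Ioi (neg_neg_of_pos hs) 0).congr_fun (fun t _ => ?_)
        measurableSet_Ioi
      change Real.exp (-s * t) = Real.exp (-(t * s))
      rw [neg_mul, mul_comm]
    rw [volumePos, ← ofReal_integral_eq_lintegral_ofReal h1
      (Filter.Eventually.of_forall fun t => (Real.exp_pos _).le), ← ENNReal.ofReal_inv_of_pos hs]
    congr 1
    have h2 := integral_exp_mul_Ioi (neg_neg_of_pos hs) 0
    simp only [mul_zero, Real.exp_zero, neg_div_neg_eq, one_div] at h2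
    rw [← h2]
    refine setIntegral_congr_fun measurableSet_Ioi fun t _ => ?_
    change Real.exp (-(t * s)) = Real.exp (-s * t)
    rw [neg_mul, mul_comm]

/-- The Gaussian integral over four-dimensional Euclidean space. -/
noncomputable def gaussianMass : ℝ≥0∞ := ∫⁻ x : FourSpace, ENNReal.ofReal (Real.exp (-‖x‖ ^ 2))

theorem gaussianMass_ne_zero : gaussianMass ≠ 0 := by
  have hm : Measurable fun x : FourSpace => ENNReal.ofReal (Real.exp (-‖x‖ ^ 2)) := by fun_prop
  have hs : (Function.support fun x : FourSpace => ENNReal.ofReal (Real.exp (-‖x‖ ^ 2))) =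
      Set.univ := by
    ext x
    simp [Real.exp_pos]
  exact ((lintegral_pos_iff_support hm).2 (by
    rw [hs]
    exact Measure.measure_univ_pos.2 (NeZero.ne _))).ne'

theorem gaussianMass_ne_top : gaussianMass ≠ ∞ := by
  have h := GaussianFourier.integral_rexp_neg_mul_sq_norm (V := FourSpace) one_pos
  have hi : Integrable fun x : FourSpace => Real.exp (-1 * ‖x‖ ^ 2) := by
    by_contra hni
    rw [integral_undef hni] at h
    have : 0 < (Real.pi / 1) ^ ((Module.finrank ℝ FourSpace : ℝ) / 2) := by positivity
    exact this.ne h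
  have := hi.lintegral_lt_top
  simp only [neg_one_mul] at this
  exact this.ne

end ChangeOfVariables

section Gaussian

open scoped ENNReal NNReal Matrix
open scoped MatrixOrder Matrix.Norms.L2Operator
open Matrix

variable {ι : Type*} [Fintype ι]

/-- The action of a square matrix on tuples of points of `FourSpace`. -/
noncomputable def matrixAction (B : Matrix ι ι ℝ) : (ι → FourSpace) →ₗ[ℝ] (ι → FourSpace) :=
  LinearMap.pi fun i => ∑ j, B i j • LinearMap.proj j

theorem matrixAction_apply (B : Matrix ι ι ℝ) (x : ι → FourSpace) (i : ι) :
    matrixAction B x i = ∑ j, B i j • x j := by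
  simp [matrixAction]

/-- Tuples of points of `FourSpace` as quadruples of coordinate vectors. -/
noncomputable def coordinateEquiv : (ι → FourSpace) ≃ₗ[ℝ] (Fin 4 → ι → ℝ) where
  toFun x k i := x i k
  invFun y i := WithLp.toLp 2 fun k => y k i
  map_add' _ _ := rfl
  map_smul' _ _ := rfl
  left_inv _ := rfl
  right_inv _ := rfl

theorem det_matrixAction [DecidableEq ι] (B : Matrix ι ι ℝ) :
    LinearMap.det (matrixAction B) = B.det ^ 4 := by
  have h : (coordinateEquiv : (ι → FourSpace) ≃ₗ[ℝ] (Fin 4 → ι → ℝ)).toLinearMap ∘ₗ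
      matrixAction B ∘ₗ coordinateEquiv.symm.toLinearMap =
      LinearMap.pi fun k => toLin' B ∘ₗ LinearMap.proj k := by
    refine LinearMap.ext fun y => ?_
    ext k i
    change matrixAction B (coordinateEquiv.symm y) i k = (B *ᵥ y k) i
    rw [matrixAction_apply, WithLp.ofLp_sum, Finset.sum_apply]
    rfl
  rw [← LinearMap.det_conj (matrixAction B) coordinateEquiv, h, LinearMap.det_pi]
  simp

theorem lintegral_exp_neg_sum_sq :
    ∫⁻ x : ι → FourSpace, ENNReal.ofReal (Real.exp (-∑ i, ‖x i‖ ^ 2)) =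
      gaussianMass ^ Fintype.card ι := by
  rw [volume_pi]
  have h : ∀ x : ι → FourSpace, ENNReal.ofReal (Real.exp (-∑ i, ‖x i‖ ^ 2)) =
      ∏ i, ENNReal.ofReal (Real.exp (-‖x i‖ ^ 2)) := fun x => by
    rw [← Finset.sum_neg_distrib, Real.exp_sum,
      ENNReal.ofReal_prod_of_nonneg fun i _ => (Real.exp_pos _).le]
  simp only [h]
  rw [lintegral_pi_prod (fun _ => (volume : Measure FourSpace))
    (f := fun _ t => ENNReal.ofReal (Real.exp (-‖t‖ ^ 2))) (fun _ => by fun_prop)]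
  simp [gaussianMass]

theorem lintegral_exp_neg_quadraticForm [DecidableEq ι] {L : Matrix ι ι ℝ} (hL : L.PosDef) :
    ∫⁻ x : ι → FourSpace, ENNReal.ofReal (Real.exp (-∑ i, ∑ j, L i j * inner ℝ (x i) (x j))) =
      gaussianMass ^ Fintype.card ι * ENNReal.ofReal (L.det⁻¹ ^ 2) := by
  obtain ⟨B, rfl⟩ : ∃ B : Matrix ι ι ℝ, L = Bᵀ * B :=
    CStarAlgebra.nonneg_iff_eq_star_mul_self.1 hL.posSemidef.nonneg
  have hdet : B.det ≠ 0 := fun h => hL.det_pos.ne' (by simp [h])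
  have hdet' : LinearMap.det (matrixAction B) ≠ 0 := by
    rw [det_matrixAction]
    exact pow_ne_zero _ hdet
  have hform : ∀ x : ι → FourSpace, ∑ i, ∑ j, (Bᵀ * B) i j * inner ℝ (x i) (x j) =
      ∑ k, ‖matrixAction B x k‖ ^ 2 := by
    intro x
    simp only [matrixAction_apply, ← real_inner_self_eq_norm_sq, sum_inner, inner_sum,
      real_inner_smul_left, real_inner_smul_right, mul_apply, transpose_apply, Finset.sum_mul]
    rw [Finset.sum_comm_cycle]
    refine Finset.sum_congr rfl fun k _ => Finset.sum_congr rfl fun i _ =>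
      Finset.sum_congr rfl fun j _ => ?_
    rw [real_inner_comm (x j)]
    ring
  have hm : Measurable fun x : ι → FourSpace =>
      ENNReal.ofReal (Real.exp (-∑ i, ‖x i‖ ^ 2)) := by fun_prop
  have hA : Measurable (matrixAction B) :=
    (LinearMap.continuous_of_finiteDimensional _).measurable
  have h := lintegral_map (μ := (volume : Measure (ι → FourSpace))) hm hA
  rw [Measure.map_linearMap_addHaar_eq_smul_addHaar volume hdet', lintegral_smul_measure,
    lintegral_exp_neg_sum_sq] at h
  simp only [hform]
  rw [← h, smul_eq_mul, mul_comm, det_matrixAction, det_mul, det_transpose]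
  congr 2
  rw [abs_of_nonneg (by positivity)]
  field_simp

end Gaussian

section PositionSpace

open scoped ENNReal NNReal

theorem lintegral_pi_eq_lintegral_lintegral_ne {ι X : Type*} [Fintype ι] [DecidableEq ι]
    [MeasurableSpace X]
    (μ : Measure X) [SigmaFinite μ] (i₀ : ι) {f : (ι → X) → ℝ≥0∞} (hf : Measurable f) :
    ∫⁻ a, f a ∂Measure.pi (fun _ : ι => μ) =
      ∫⁻ t, ∫⁻ c, f (fun i => if h : i = i₀ then t else c ⟨i, h⟩)
        ∂Measure.pi (fun _ : {i // i ≠ i₀} => μ) ∂μ := by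
  have h1 := (measurePreserving_piEquivPiSubtypeProd (fun _ : ι => μ) (· = i₀)).symm
  have h2 : MeasurePreserving (MeasurableEquiv.funUnique {i // i = i₀} X).symm μ
      (Measure.pi fun _ => μ) := by
    convert (measurePreserving_funUnique μ {i // i = i₀}).symm
  have hf' : Measurable fun p =>
      f ((MeasurableEquiv.piEquivPiSubtypeProd (fun _ : ι => X) (· = i₀)).symm p) :=
    hf.comp h1.measurable
  rw [← h1.lintegral_comp hf, lintegral_prod _ hf'.aemeasurable]
  refine Eq.trans ?_ (h2.lintegral_comp hf'.lintegral_prod_right').symm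
  congr!

theorem lintegral_volumePos_smul {r : ℝ} (hr : 0 < r) {f : ℝ → ℝ≥0∞} (hf : Measurable f) :
    ∫⁻ t, f t ∂volumePos = ENNReal.ofReal r * ∫⁻ t, f (r * t) ∂volumePos := by
  rw [volumePos, ← lintegral_indicator measurableSet_Ioi, ← lintegral_indicator measurableSet_Ioi,
    lintegral_eq_mul_lintegral_smul volume hr (hf.indicator measurableSet_Ioi),
    Module.finrank_self, pow_one]
  congr 1
  refine lintegral_congr fun x => ?_
  simp [Set.indicator_apply, hr]

/-- The indicator function of `[1/2, 2]`. -/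
noncomputable def shell : ℝ → ℝ≥0∞ := (Set.Icc (1 / 2) 2).indicator 1

theorem measurable_shell : Measurable shell := measurable_one.indicator measurableSet_Icc

theorem shell_inv (t : ℝ) : shell t⁻¹ = shell t := by
  have h : t⁻¹ ∈ Set.Icc (1 / 2 : ℝ) 2 ↔ t ∈ Set.Icc (1 / 2 : ℝ) 2 := by
    have aux : ∀ s : ℝ, s ∈ Set.Icc (1 / 2 : ℝ) 2 → s⁻¹ ∈ Set.Icc (1 / 2 : ℝ) 2 := by
      rintro s ⟨h1, h2⟩
      have hs : 0 < s := by linarith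
      refine ⟨?_, ?_⟩
      · rw [one_div]
        exact inv_anti₀ hs h2
      · exact (inv_anti₀ (by norm_num) h1).trans (by norm_num)
    exact ⟨fun h => by simpa using aux _ h, aux t⟩
  unfold shell
  by_cases ht : t ∈ Set.Icc (1 / 2 : ℝ) 2
  · rw [Set.indicator_of_mem ht, Set.indicator_of_mem (h.2 ht), Pi.one_apply, Pi.one_apply]
  · rw [Set.indicator_of_notMem ht, Set.indicator_of_notMem fun h' => ht (h.1 h')]

/-- The mass of `shell` for the scale-invariant measure on the positive half-line. -/
noncomputable def shellMass : ℝ≥0∞ := ∫⁻ t, ENNReal.ofReal t⁻¹ * shell t ∂volumePos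

theorem lintegral_inv_mul_shell {s : ℝ} (hs : 0 < s) :
    ∫⁻ t, ENNReal.ofReal t⁻¹ * shell (s / t) ∂volumePos = shellMass := by
  have hm := measurable_shell
  have hf : Measurable fun t : ℝ => ENNReal.ofReal t⁻¹ * shell (s / t) := by fun_prop
  rw [lintegral_volumePos_smul hs hf, ← lintegral_const_mul _ (by fun_prop), shellMass]
  refine lintegral_congr fun t => ?_
  rw [← mul_assoc, ← ENNReal.ofReal_mul hs.le, mul_inv, mul_inv_cancel_left₀ hs.ne',
    div_mul_cancel_left₀ hs.ne', shell_inv]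

theorem shellMass_ne_zero : shellMass ≠ 0 := by
  have hm := measurable_shell
  have h : ENNReal.ofReal (1 / 2) * (∫⁻ t in Set.Icc (1 / 2 : ℝ) 2, 1) ≤ shellMass := by
    rw [shellMass, volumePos, ← lintegral_indicator measurableSet_Icc,
      ← lintegral_indicator measurableSet_Ioi,
      ← lintegral_const_mul _ (measurable_const.indicator measurableSet_Icc)]
    refine lintegral_mono fun t => ?_
    by_cases ht : t ∈ Set.Icc (1 / 2 : ℝ) 2
    · have ht0 : 0 < t := by linarith [ht.1]
      rw [Set.indicator_of_mem ht, Set.indicator_of_mem (Set.mem_Ioi.2 ht0), shell,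
        Set.indicator_of_mem ht, Pi.one_apply]
      gcongr
      rw [one_div]
      exact inv_anti₀ ht0 ht.2
    · rw [Set.indicator_of_notMem ht, mul_zero]
      exact zero_le
  intro h0
  rw [h0] at h
  norm_num at h

theorem shellMass_ne_top : shellMass ≠ ∞ := by
  have h : shellMass ≤ ENNReal.ofReal 2 * (∫⁻ t in Set.Icc (1 / 2 : ℝ) 2, 1) := by
    rw [shellMass, ← lintegral_indicator measurableSet_Icc,
      ← lintegral_const_mul _ (measurable_const.indicator measurableSet_Icc)]
    refine (lintegral_mono' Measure.restrict_le_self le_rfl).trans (lintegral_mono fun t => ?_)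
    by_cases ht : t ∈ Set.Icc (1 / 2 : ℝ) 2
    · rw [Set.indicator_of_mem ht, shell, Set.indicator_of_mem ht, Pi.one_apply]
      gcongr
      exact (inv_anti₀ (by norm_num) ht.1).trans (by norm_num)
    · rw [shell, Set.indicator_of_notMem ht, mul_zero]
      exact zero_le
  refine (h.trans_lt ?_).ne
  simp only [setLIntegral_one, Real.volume_Icc]
  exact ENNReal.mul_lt_top ENNReal.ofReal_lt_top ENNReal.ofReal_lt_top

variable {V : Type*}

theorem continuous_edgeNormSq_extendZero (r : V) (e : Sym2 V) :
    Continuous fun x : {i : V // i ≠ r} → FourSpace => edgeNormSq (extendZero r x) e := by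
  have h : ∀ i, Continuous fun x : {i : V // i ≠ r} → FourSpace => extendZero r x i := by
    intro i
    unfold extendZero
    by_cases hi : i = r
    · simp only [hi, dite_true]
      exact continuous_const
    · simp only [hi, dite_false]
      exact continuous_apply _
  induction e with
  | _ i j => exact ((h i).sub (h j)).norm.pow 2

theorem edgeNormSq_extendZero_smul (r : V) (s : ℝ) (x : {i : V // i ≠ r} → FourSpace)
    (e : Sym2 V) :
    edgeNormSq (extendZero r (s • x)) e = s ^ 2 * edgeNormSq (extendZero r x) e := by
  have h : ∀ i, extendZero r (s • x) i = s • extendZero r x i := by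
    intro i
    unfold extendZero
    split_ifs <;> simp
  induction e with
  | _ i j =>
    change ‖_ - _‖ ^ 2 = s ^ 2 * ‖_ - _‖ ^ 2
    rw [h, h, ← smul_sub, norm_smul, mul_pow, Real.norm_eq_abs, sq_abs]

variable [Fintype V]

/-- The position-space Feynman integral with the vertex `r` at the origin and `z` near the unit
sphere. -/
noncomputable def positionIntegral (G : SimpleGraph V) (r : V) (z : {i : V // i ≠ r}) : ℝ≥0∞ :=
  ∫⁻ x : {i : V // i ≠ r} → FourSpace, shell (‖x z‖ ^ 2) *
    ∏ e : G.edgeSet, (ENNReal.ofReal (edgeNormSq (extendZero r x) e))⁻¹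

/-- The Boltzmann weight of the Dirichlet form. -/
noncomputable def gaussianWeight (G : SimpleGraph V) (r : V) (a : G.edgeSet → ℝ)
    (x : {i : V // i ≠ r} → FourSpace) : ℝ≥0∞ :=
  ENNReal.ofReal (Real.exp (-dirichletForm G a (extendZero r x)))

theorem measurable_gaussianWeight (G : SimpleGraph V) (r : V) :
    Measurable fun p : (G.edgeSet → ℝ) × ({i : V // i ≠ r} → FourSpace) =>
      gaussianWeight G r p.1 p.2 := by
  have h : Continuous fun p : (G.edgeSet → ℝ) × ({i : V // i ≠ r} → FourSpace) =>
      dirichletForm G p.1 (extendZero r p.2) :=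
    continuous_finsetSum _ fun e _ => ((continuous_apply e).comp continuous_fst).mul
      ((continuous_edgeNormSq_extendZero r e).comp continuous_snd)
  exact ENNReal.measurable_ofReal.comp (Real.continuous_exp.comp h.neg).measurable

theorem prod_inv_edgeNormSq (G : SimpleGraph V) (r : V) (x : {i : V // i ≠ r} → FourSpace) :
    ∏ e : G.edgeSet, (ENNReal.ofReal (edgeNormSq (extendZero r x) e))⁻¹ =
      ∫⁻ a, gaussianWeight G r a x ∂Measure.pi (fun _ : G.edgeSet => volumePos) := by
  have h : ∀ a : G.edgeSet → ℝ, gaussianWeight G r a x =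
      ∏ e : G.edgeSet, ENNReal.ofReal (Real.exp (-(a e * edgeNormSq (extendZero r x) e))) := by
    intro a
    rw [gaussianWeight, dirichletForm, ← Finset.sum_neg_distrib, Real.exp_sum,
      ENNReal.ofReal_prod_of_nonneg fun i _ => (Real.exp_pos _).le]
  simp only [h]
  rw [lintegral_pi_prod (fun _ => volumePos)
    (f := fun (e : G.edgeSet) t => ENNReal.ofReal (Real.exp (-(t * edgeNormSq (extendZero r x) e))))
    (fun _ => by fun_prop)]
  exact Finset.prod_congr rfl fun e _ => (setLIntegral_exp_neg_mul (edgeNormSq_nonneg _ _)).symm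

theorem gaussianWeight_smul (G : SimpleGraph V) (r : V) (a : G.edgeSet → ℝ) (s : ℝ)
    (x : {i : V // i ≠ r} → FourSpace) :
    gaussianWeight G r a (s • x) = gaussianWeight G r (s ^ 2 • a) x := by
  simp only [gaussianWeight, dirichletForm, edgeNormSq_extendZero_smul, Pi.smul_apply, smul_eq_mul]
  congr 4
  ext e
  ring

theorem lintegral_gaussianWeight {G : SimpleGraph V} (hG : G.Connected) (r : V)
    {a : G.edgeSet → ℝ} (ha : ∀ e, 0 < a e) :
    ∫⁻ x, gaussianWeight G r a x =
      gaussianMass ^ Fintype.card {i : V // i ≠ r} *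
        ENNReal.ofReal ((graphLaplacian G r a).det⁻¹ ^ 2) := by
  rw [← lintegral_exp_neg_quadraticForm (posDef_graphLaplacian hG ha r)]
  simp only [gaussianWeight, dirichletForm_extendZero]

end PositionSpace

section Parametric

open scoped ENNReal NNReal

variable {V : Type*} [Fintype V]

theorem measurable_shell_mul_gaussianWeight (G : SimpleGraph V) (r : V) (z : {i : V // i ≠ r}) :
    Measurable fun p : (G.edgeSet → ℝ) × ({i : V // i ≠ r} → FourSpace) =>
      shell (‖p.2 z‖ ^ 2) * gaussianWeight G r p.1 p.2 :=
  (measurable_shell.comp (((measurable_pi_apply z).comp measurable_snd).norm.pow_const 2)).mul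
    (measurable_gaussianWeight G r)

theorem positionIntegral_eq_lintegral_gaussianWeight (G : SimpleGraph V) (r : V)
    (z : {i : V // i ≠ r}) :
    positionIntegral G r z = ∫⁻ a, (∫⁻ x, shell (‖x z‖ ^ 2) * gaussianWeight G r a x)
      ∂Measure.pi (fun _ : G.edgeSet => volumePos) := by
  have hm := measurable_shell_mul_gaussianWeight G r z
  simp only [positionIntegral, prod_inv_edgeNormSq]
  rw [lintegral_lintegral_swap hm.aemeasurable]
  have hw := measurable_gaussianWeight G r
  exact lintegral_congr fun x => (lintegral_const_mul _ (by fun_prop)).symm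

theorem lintegral_shell_mul_gaussianWeight_smul (G : SimpleGraph V) (r : V)
    (z : {i : V // i ≠ r}) (a : G.edgeSet → ℝ) {t : ℝ} (ht : 0 < t) :
    ∫⁻ x, shell (‖x z‖ ^ 2) * gaussianWeight G r (t • a) x =
      ENNReal.ofReal (t ^ (2 * Fintype.card {i : V // i ≠ r}))⁻¹ *
        ∫⁻ x, shell (‖x z‖ ^ 2 / t) * gaussianWeight G r a x := by
  have hs : 0 < (√t)⁻¹ := inv_pos.2 (Real.sqrt_pos.2 ht)
  have hsq : (√t)⁻¹ ^ 2 = t⁻¹ := by rw [inv_pow, Real.sq_sqrt ht.le]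
  have hm : Measurable fun x => shell (‖x z‖ ^ 2) * gaussianWeight G r (t • a) x := by
    have h := (measurable_shell_mul_gaussianWeight G r z).comp
      (measurable_prodMk_left (x := t • a))
    exact h
  rw [lintegral_eq_mul_lintegral_smul volume hs hm]
  congr 2
  · have hrank : Module.finrank ℝ ({i : V // i ≠ r} → FourSpace) =
        2 * (2 * Fintype.card {i : V // i ≠ r}) := by
      rw [Module.finrank_pi_fintype]
      simp
      ring
    rw [hrank, pow_mul, hsq, inv_pow]
  · ext x
    rw [gaussianWeight_smul, hsq, smul_smul, inv_mul_cancel₀ ht.ne', one_smul, Pi.smul_apply,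
      norm_smul, mul_pow, Real.norm_eq_abs, sq_abs, hsq, inv_mul_eq_div]

theorem continuous_chart (G : SimpleGraph V) (e₀ : G.edgeSet) : Continuous (chart G e₀) := by
  refine continuous_pi fun e => ?_
  unfold chart
  by_cases h : e = e₀
  · simp only [h, dite_true]
    exact continuous_const
  · simp only [h, dite_false]
    exact continuous_apply _

theorem chart_pos (G : SimpleGraph V) (e₀ : G.edgeSet) {u : {e : G.edgeSet // e ≠ e₀} → ℝ}
    (hu : ∀ e, 0 < u e) (e : G.edgeSet) : 0 < chart G e₀ u e := by
  unfold chart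
  split_ifs
  · exact one_pos
  · exact hu _

theorem kirchhoff_chart (G : SimpleGraph V) (r : V) (e₀ : G.edgeSet)
    {u : {e : G.edgeSet // e ≠ e₀} → ℝ} (hu : ∀ e, 0 < u e) :
    kirchhoff G (chart G e₀ u) =
      (∏ e, u e) * (graphLaplacian G r (chart G e₀ fun e => (u e)⁻¹)).det := by
  rw [kirchhoff_eq_prod_mul_det G r _ fun e => (chart_pos G e₀ hu e).ne']
  congr 1
  · rw [Fintype.prod_eq_mul_prod_subtype_ne _ e₀]
    have h : chart G e₀ u e₀ = 1 := by simp [chart]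
    rw [h, one_mul]
    refine Finset.prod_congr rfl fun e _ => ?_
    simp [chart, e.2]
  · congr 2
    ext e
    unfold chart
    split_ifs <;> simp

theorem lintegral_lintegral_gaussianWeight_chart {G : SimpleGraph V} (hG : G.Connected) (r : V)
    (e₀ : G.edgeSet) :
    ∫⁻ u, (∫⁻ x, gaussianWeight G r (chart G e₀ u) x)
        ∂Measure.pi (fun _ : {e : G.edgeSet // e ≠ e₀} => volumePos) =
      gaussianMass ^ Fintype.card {i : V // i ≠ r} *
        ∫⁻ u, ENNReal.ofReal ((kirchhoff G (chart G e₀ u))⁻¹ ^ 2)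
          ∂Measure.pi (fun _ : {e : G.edgeSet // e ≠ e₀} => volumePos) := by
  have hm : Measurable fun u => ∫⁻ x, gaussianWeight G r (chart G e₀ u) x := by
    have h := (measurable_gaussianWeight G r).lintegral_prod_right' (ν := volume) |>.comp
      (continuous_chart G e₀).measurable
    exact h
  rw [lintegral_pi_comp_of_map_withDensity (by fun_prop) measurable_inv map_inv_volumePos hm,
    ← lintegral_const_mul' _ _ (ENNReal.pow_ne_top gaussianMass_ne_top)]
  refine lintegral_congr_ae ?_
  filter_upwards [ae_pi_volumePos] with u hu
  rw [lintegral_gaussianWeight hG r (chart_pos G e₀ fun e => inv_pos.2 (hu e)), mul_left_comm,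
    kirchhoff_chart G r e₀ hu, mul_inv, mul_pow, ENNReal.ofReal_mul (sq_nonneg _),
    ← Finset.prod_inv_distrib, ← Finset.prod_pow,
    ENNReal.ofReal_prod_of_nonneg fun e _ => sq_nonneg _]
  congr 2
  refine Finset.prod_congr rfl fun e _ => ?_
  rw [ENNReal.ofReal]
  congr 1
  ext
  rw [Real.coe_toNNReal _ (sq_nonneg _)]
  simp

theorem measurable_gaussianWeight_chart (G : SimpleGraph V) (r : V) (e₀ : G.edgeSet) :
    Measurable fun q : ({e : G.edgeSet // e ≠ e₀} → ℝ) × ({i : V // i ≠ r} → FourSpace) =>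
      gaussianWeight G r (chart G e₀ q.1) q.2 := by
  have hw := measurable_gaussianWeight G r
  have hc := (continuous_chart G e₀).measurable
  fun_prop

theorem measurable_inv_mul_shell_mul_gaussianWeight_chart (G : SimpleGraph V) (r : V)
    (z : {i : V // i ≠ r}) (e₀ : G.edgeSet) :
    Measurable fun q : ℝ × ({e : G.edgeSet // e ≠ e₀} → ℝ) × ({i : V // i ≠ r} → FourSpace) =>
      ENNReal.ofReal q.1⁻¹ *
        (shell (‖q.2.2 z‖ ^ 2 / q.1) * gaussianWeight G r (chart G e₀ q.2.1) q.2.2) := by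
  have hw := (measurable_gaussianWeight_chart G r e₀).comp
    (@measurable_snd ℝ _ Real.measurableSpace _)
  have hz : Measurable fun q : ℝ × ({e : G.edgeSet // e ≠ e₀} → ℝ) ×
      ({i : V // i ≠ r} → FourSpace) => q.2.2 z :=
    (measurable_pi_apply z).comp (measurable_snd.comp measurable_snd)
  exact measurable_fst.inv.ennreal_ofReal.mul
    ((measurable_shell.comp ((hz.norm.pow_const 2).div measurable_fst)).mul
      hw)

theorem lintegral_shell_mul_gaussianWeight_dite (G : SimpleGraph V) (r : V)
    (z : {i : V // i ≠ r}) (e₀ : G.edgeSet)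
    (hcard : Fintype.card {e : G.edgeSet // e ≠ e₀} + 1 = 2 * Fintype.card {i : V // i ≠ r})
    {t : ℝ} (ht : 0 < t) :
    ∫⁻ c, (∫⁻ x, shell (‖x z‖ ^ 2) *
        gaussianWeight G r (fun e => if h : e = e₀ then t else c ⟨e, h⟩) x)
        ∂Measure.pi (fun _ : {e : G.edgeSet // e ≠ e₀} => volumePos) =
      ∫⁻ q : ({e : G.edgeSet // e ≠ e₀} → ℝ) × ({i : V // i ≠ r} → FourSpace),
        ENNReal.ofReal t⁻¹ * (shell (‖q.2 z‖ ^ 2 / t) * gaussianWeight G r (chart G e₀ q.1) q.2)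
        ∂(Measure.pi (fun _ : {e : G.edgeSet // e ≠ e₀} => volumePos)).prod volume := by
  have hins : Measurable fun (c : {e : G.edgeSet // e ≠ e₀} → ℝ) (e : G.edgeSet) =>
      if h : e = e₀ then t else c ⟨e, h⟩ := by
    refine measurable_pi_lambda _ fun e => ?_
    by_cases h : e = e₀
    · simp only [h, dite_true]
      exact measurable_const
    · simp only [h, dite_false]
      exact measurable_pi_apply _
  have hf : Measurable fun c : {e : G.edgeSet // e ≠ e₀} → ℝ => ∫⁻ x, shell (‖x z‖ ^ 2) *
      gaussianWeight G r (fun e => if h : e = e₀ then t else c ⟨e, h⟩) x := by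
    have h := (measurable_shell_mul_gaussianWeight G r z).lintegral_prod_right'
      (ν := volume) |>.comp hins
    exact h
  have hg : Measurable fun q : ({e : G.edgeSet // e ≠ e₀} → ℝ) ×
      ({i : V // i ≠ r} → FourSpace) => ENNReal.ofReal t⁻¹ *
        (shell (‖q.2 z‖ ^ 2 / t) * gaussianWeight G r (chart G e₀ q.1) q.2) := by
    have h := (measurable_inv_mul_shell_mul_gaussianWeight_chart G r z e₀).comp
      (measurable_prodMk_left (x := t))
    exact h
  rw [lintegral_pi_volumePos_smul ht hf, lintegral_prod _ hg.aemeasurable,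
    ← lintegral_const_mul' _ _ ENNReal.ofReal_ne_top]
  refine lintegral_congr fun b => ?_
  have hb : (fun e : G.edgeSet => if h : e = e₀ then t else (t • b) ⟨e, h⟩) =
      t • chart G e₀ b := by
    ext e
    rw [Pi.smul_apply, chart]
    split_ifs <;> simp
  rw [hb, lintegral_shell_mul_gaussianWeight_smul G r z _ ht, ← mul_assoc,
    ← ENNReal.ofReal_mul (by positivity), lintegral_const_mul' _ _ ENNReal.ofReal_ne_top, ← hcard]
  congr 2
  rw [pow_succ]
  field_simp

theorem positionIntegral_eq_shellMass_mul {G : SimpleGraph V} (hG : G.Connected) (r : V)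
    (z : {i : V // i ≠ r}) (e₀ : G.edgeSet)
    (hcard : Fintype.card {e : G.edgeSet // e ≠ e₀} + 1 = 2 * Fintype.card {i : V // i ≠ r}) :
    positionIntegral G r z = shellMass * (gaussianMass ^ Fintype.card {i : V // i ≠ r} *
      ∫⁻ u, ENNReal.ofReal ((kirchhoff G (chart G e₀ u))⁻¹ ^ 2)
        ∂Measure.pi (fun _ : {e : G.edgeSet // e ≠ e₀} => volumePos)) := by
  have hs := measurable_shell
  have hw := measurable_gaussianWeight_chart G r e₀
  have hF := measurable_inv_mul_shell_mul_gaussianWeight_chart G r z e₀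
  have hm : Measurable fun a : G.edgeSet → ℝ =>
      ∫⁻ x, shell (‖x z‖ ^ 2) * gaussianWeight G r a x :=
    (measurable_shell_mul_gaussianWeight G r z).lintegral_prod_right'
  rw [positionIntegral_eq_lintegral_gaussianWeight,
    lintegral_pi_eq_lintegral_lintegral_ne _ e₀ hm,
    lintegral_congr_ae (ae_volumePos.mono fun t ht =>
      lintegral_shell_mul_gaussianWeight_dite G r z e₀ hcard ht),
    lintegral_lintegral_swap hF.aemeasurable, ← lintegral_lintegral_gaussianWeight_chart hG,
    ← lintegral_prod _ hw.aemeasurable, ← lintegral_const_mul _ hw]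
  have hz : ∀ᵐ q ∂(Measure.pi (fun _ : {e : G.edgeSet // e ≠ e₀} => volumePos)).prod
      (volume : Measure ({i : V // i ≠ r} → FourSpace)), q.2 z ≠ 0 :=
    Measure.quasiMeasurePreserving_snd.ae
      ((Measure.quasiMeasurePreserving_eval (fun _ => volume) z).ae
        (compl_mem_ae_iff.2 (measure_singleton 0)))
  refine lintegral_congr_ae (hz.mono fun q hq => ?_)
  have hpos : 0 < ‖q.2 z‖ ^ 2 := by positivity
  simp only [← mul_assoc]
  rw [lintegral_mul_const _ (by fun_prop), lintegral_inv_mul_shell hpos]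

end Parametric

section Inversion

open scoped ENNReal NNReal

theorem unitInversion_zero : unitInversion 0 = 0 := EuclideanGeometry.inversion_self 0 1

theorem norm_unitInversion (x : FourSpace) : ‖unitInversion x‖ = ‖x‖⁻¹ := by
  have h := EuclideanGeometry.dist_inversion_center (0 : FourSpace) x 1
  rwa [dist_zero_right, dist_zero_right, one_pow, one_div] at h

theorem norm_unitInversion_sub_sq_mul {x y : FourSpace} (hx : x ≠ 0) (hy : y ≠ 0) :
    ‖unitInversion x - unitInversion y‖ ^ 2 * (‖x‖ ^ 2 * ‖y‖ ^ 2) = ‖x - y‖ ^ 2 := by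
  have h := EuclideanGeometry.dist_inversion_inversion hx hy 1
  rw [dist_zero_right, dist_zero_right, dist_eq_norm, dist_eq_norm] at h
  have hx' := norm_ne_zero_iff.2 hx
  have hy' := norm_ne_zero_iff.2 hy
  unfold unitInversion
  rw [h]
  field_simp

variable {W : Type*}

/-- The squared length of an edge not incident to `v`, and `1` for an edge incident to `v`. -/
noncomputable def deletedNormSq (v : W) (y : W → FourSpace) : Sym2 W → ℝ :=
  Sym2.lift ⟨fun i j => if i = v ∨ j = v then 1 else ‖y i - y j‖ ^ 2, fun i j => by
    simp only [or_comm, norm_sub_rev]⟩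

theorem deletedNormSq_mk (v : W) (y : W → FourSpace) (i j : W) :
    deletedNormSq v y s(i, j) = if i = v ∨ j = v then 1 else ‖y i - y j‖ ^ 2 := rfl

theorem deletedNormSq_nonneg (v : W) (y : W → FourSpace) (e : Sym2 W) :
    0 ≤ deletedNormSq v y e := by
  induction e with
  | _ i j =>
    rw [deletedNormSq_mk]
    split_ifs <;> positivity

theorem deletedNormSq_unitInversion_mul {v w : W} (hvw : v ≠ w) {y : W → FourSpace}
    (hyv : y v = 0) (hyw : y w = 0) (hy : ∀ i, i ≠ v → i ≠ w → y i ≠ 0) {n : W → ℝ}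
    (hnv : n v = 1) (hnw : n w = 1) (hn : ∀ i, i ≠ v → i ≠ w → n i = ‖y i‖ ^ 2)
    {i j : W} (hij : i ≠ j) :
    deletedNormSq v (fun k => unitInversion (y k)) s(i, j) * (n i * n j) =
      deletedNormSq w y s(i, j) := by
  have key : ∀ k, k ≠ v → k ≠ w → ‖unitInversion (y k)‖ ^ 2 * ‖y k‖ ^ 2 = 1 := by
    intro k h1 h2
    have := norm_ne_zero_iff.2 (hy k h1 h2)
    rw [norm_unitInversion]
    field_simp
  rw [deletedNormSq_mk, deletedNormSq_mk]
  by_cases hiv : i = v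
  · subst hiv
    by_cases hjw : j = w
    · subst hjw; simp [hnv, hnw]
    · simp [hnv, hn j hij.symm hjw, hyv, hvw, hjw]
  by_cases hjv : j = v
  · subst hjv
    by_cases hiw : i = w
    · subst hiw; simp [hnv, hnw]
    · simp [hnv, hn i hij hiw, hyv, hvw, hiw]
  by_cases hiw : i = w
  · subst hiw
    simp [hyw, hnw, hiv, hjv, unitInversion_zero, hn j hjv hij.symm, key j hjv hij.symm]
  by_cases hjw : j = w
  · subst hjw
    simp [hyw, hnw, hiv, hjv, unitInversion_zero, hn i hiv hij, key i hiv hij]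
  simp only [hiv, hjv, hiw, hjw, or_self, if_false, hn i hiv hiw, hn j hjv hjw]
  exact norm_unitInversion_sub_sq_mul (hy i hiv hiw) (hy j hjv hjw)

variable [Fintype W]

theorem prod_compl_singleton {M : Type*} [CommMonoid M] (v : W) {f : W → M} (hf : f v = 1) :
    ∏ i : ({v}ᶜ : Set W), f i = ∏ i, f i := by
  rw [Finset.prod_set_coe ({v}ᶜ : Set W)]
  refine Finset.prod_subset (Finset.subset_univ _) fun i _ hi => ?_
  have : i = v := by simpa using hi
  rw [this, hf]

theorem prod_edgeNormSq_induce_compl (G : SimpleGraph W) (v : W) (y : W → FourSpace)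
    {H : SimpleGraph ({v}ᶜ : Set W)} (hH : H = G.induce ({v}ᶜ : Set W)) :
    ∏ e : H.edgeSet,
        edgeNormSq (fun i : ({v}ᶜ : Set W) => y i) (e : Sym2 ({v}ᶜ : Set W)) =
      ∏ e : G.edgeSet, deletedNormSq v y e := by
  rw [← pow_left_inj₀ (Finset.prod_nonneg fun e _ => edgeNormSq_nonneg _ _)
    (Finset.prod_nonneg fun e _ => deletedNormSq_nonneg _ _ _) two_ne_zero,
    ← G.prod_prod_adj (deletedNormSq v y),
    ← H.prod_prod_adj (edgeNormSq fun i : ({v}ᶜ : Set W) => y i)]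
  have hv : ∀ i, (if G.Adj i v then deletedNormSq v y s(i, v) else 1) = 1 := fun i => by
    simp [deletedNormSq_mk]
  have hv' : ∀ i, (if G.Adj v i then deletedNormSq v y s(v, i) else 1) = 1 := fun i => by
    simp [deletedNormSq_mk]
  rw [← prod_compl_singleton v (Finset.prod_eq_one fun j _ => hv' j)]
  refine Finset.prod_congr rfl fun i _ => ?_
  rw [← prod_compl_singleton v (hv i)]
  refine Finset.prod_congr rfl fun j _ => ?_
  have hi : (i : W) ≠ v := i.2
  have hj : (j : W) ≠ v := j.2
  simp [deletedNormSq_mk, hi, hj, edgeNormSq, hH]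

theorem prod_edge_mul_of_regular {G : SimpleGraph W} {d : ℕ} (hdeg : ∀ i, G.degree i = d)
    {n : W → ℝ} (hn : ∀ i, 0 ≤ n i) :
    ∏ e : G.edgeSet, Sym2.lift ⟨fun i j => n i * n j, fun _ _ => mul_comm _ _⟩ (e : Sym2 W) =
      ∏ i, n i ^ d := by
  have hnn : ∀ e : Sym2 W,
      0 ≤ Sym2.lift ⟨fun i j => n i * n j, fun _ _ => mul_comm _ _⟩ e := fun e => by
    induction e with
    | _ i j => exact mul_nonneg (hn i) (hn j)
  rw [← pow_left_inj₀ (Finset.prod_nonneg fun e _ => hnn _)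
    (Finset.prod_nonneg fun i _ => pow_nonneg (hn i) d) two_ne_zero, ← SimpleGraph.prod_prod_adj]
  have h1 : ∀ i, ∏ j, (if G.Adj i j then n i else 1) = n i ^ d := fun i => by
    rw [← Finset.prod_filter, Finset.prod_const, ← G.neighborFinset_eq_filter,
      G.card_neighborFinset_eq_degree, hdeg]
  have h2 : ∀ i j, (if G.Adj i j then
      Sym2.lift ⟨fun i j => n i * n j, fun _ _ => mul_comm _ _⟩ s(i, j) else 1) =
      (if G.Adj i j then n i else 1) * (if G.Adj j i then n j else 1) := fun i j => by
    simp only [G.adj_comm j i, Sym2.lift_mk]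
    split_ifs <;> simp
  simp_rw [h2, Finset.prod_mul_distrib]
  rw [Finset.prod_comm (f := fun i j => if G.Adj j i then n j else 1)]
  simp_rw [h1]
  rw [sq]

theorem prod_deletedNormSq_unitInversion_mul {G : SimpleGraph W} (hdeg : ∀ i, G.degree i = 4)
    {v w : W} (hvw : v ≠ w) {p : W → Prop} (hp : ∀ i, p i ↔ i ≠ v ∧ i ≠ w) {y : W → FourSpace}
    (hyv : y v = 0) (hyw : y w = 0) (hy : ∀ i, p i → y i ≠ 0) :
    (∏ e : G.edgeSet, deletedNormSq v (fun k => unitInversion (y k)) e) *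
      ∏ i : {i // p i}, ‖y i‖ ^ 8 = ∏ e : G.edgeSet, deletedNormSq w y e := by
  set n : W → ℝ := fun i => if p i then ‖y i‖ ^ 2 else 1 with hn
  have hn0 : ∀ i, 0 ≤ n i := fun i => by
    rw [hn]; dsimp only; split_ifs <;> positivity
  have hprod : ∏ i : {i // p i}, ‖y i‖ ^ 8 = ∏ i, n i ^ 4 := by
    rw [hn]
    simp only [ite_pow, one_pow, ← pow_mul]
    rw [← Finset.prod_filter]
    exact (Finset.prod_subtype (Finset.univ.filter p) (fun i => by simp) fun i => ‖y i‖ ^ 8).symm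
  rw [hprod, ← prod_edge_mul_of_regular hdeg hn0, ← Finset.prod_mul_distrib]
  refine Finset.prod_congr rfl fun e _ => ?_
  obtain ⟨e, he⟩ := e
  induction e with
  | _ i j =>
    refine deletedNormSq_unitInversion_mul hvw hyv hyw (fun i h1 h2 => hy i ((hp i).2 ⟨h1, h2⟩))
      ?_ ?_ ?_ (G.ne_of_adj he)
    · simp [hn, hp]
    · simp [hn, hp]
    · intro i h1 h2
      simp [hn, hp, h1, h2]

theorem lintegral_comp_equiv_symm {ι ι' X : Type*} {_ : Fintype ι} {_ : Fintype ι'}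
    [MeasureSpace X] [SigmaFinite (volume : Measure X)] (f : ι ≃ ι') (F : (ι' → X) → ℝ≥0∞) :
    ∫⁻ x : ι → X, F (fun i => x (f.symm i)) = ∫⁻ y : ι' → X, F y := by
  rw [← (volume_measurePreserving_piCongrLeft (fun _ : ι' => X) f).lintegral_comp_emb
    (MeasurableEquiv.measurableEmbedding _)]
  refine lintegral_congr fun x => congrArg F (funext fun i => ?_)
  obtain ⟨j, rfl⟩ := f.surjective i
  rw [MeasurableEquiv.piCongrLeft_apply_apply, f.symm_apply_apply]

theorem positionIntegral_induce_compl (G : SimpleGraph W) {v w : W} (hvw : w ≠ v)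
    {p : W → Prop} (hp : ∀ i, p i ↔ i ≠ v ∧ i ≠ w) {z : W} (hz : p z)
    (w' : ({v}ᶜ : Set W)) (hw' : (w' : W) = w) (z' : {i : ({v}ᶜ : Set W) // i ≠ w'})
    (hz' : ((z' : ({v}ᶜ : Set W)) : W) = z) :
    positionIntegral (G.induce ({v}ᶜ : Set W)) w' z' =
      ∫⁻ y : {i // p i} → FourSpace, shell (‖y ⟨z, hz⟩‖ ^ 2) *
        (ENNReal.ofReal (∏ e : G.edgeSet,
          deletedNormSq v (fun i => if h : p i then y ⟨i, h⟩ else 0) e))⁻¹ := by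
  subst hw'
  let f : {i : ({v}ᶜ : Set W) // i ≠ w'} ≃ {i // p i} :=
    { toFun := fun i => ⟨i, (hp _).2 ⟨i.1.2, fun h => i.2 (Subtype.ext h)⟩⟩
      invFun := fun i => ⟨⟨i, ((hp _).1 i.2).1⟩, fun h => ((hp _).1 i.2).2 (congrArg Subtype.val h)⟩
      left_inv := fun i => rfl
      right_inv := fun i => rfl }
  refine Eq.trans (lintegral_congr fun x => ?_) (lintegral_comp_equiv_symm f _)
  congr 1
  · subst hz'
    rfl
  · have hx : (fun i : ({v}ᶜ : Set W) => if h : p i then x (f.symm ⟨i, h⟩) else 0) =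
        extendZero w' x := funext fun i => by
      by_cases hi : i = w'
      · simp [extendZero, hi, hp]
      · have : p i := (hp i).2 ⟨i.2, fun h => hi (Subtype.ext h)⟩
        simp only [extendZero, hi, this, dif_pos, dif_neg, not_false_eq_true]
        rfl
    rw [← prod_edgeNormSq_induce_compl G v _ rfl, hx,
      ENNReal.ofReal_prod_of_nonneg fun e _ => edgeNormSq_nonneg _ _, ENNReal.prod_inv_distrib]
    exact fun e _ e' _ _ => Or.inr ENNReal.ofReal_ne_top

theorem positionIntegral_induce_compl_comm {G : SimpleGraph W} (hdeg : ∀ i, G.degree i = 4)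
    {v w : W} (hvw : v ≠ w) {z : W} (hzv : z ≠ v) (hzw : z ≠ w) :
    positionIntegral (G.induce ({v}ᶜ : Set W)) ⟨w, hvw.symm⟩
        ⟨⟨z, hzv⟩, fun h => hzw (congrArg Subtype.val h)⟩ =
      positionIntegral (G.induce ({w}ᶜ : Set W)) ⟨v, hvw⟩
        ⟨⟨z, hzw⟩, fun h => hzv (congrArg Subtype.val h)⟩ := by
  obtain ⟨p, hp⟩ : ∃ p : W → Prop, ∀ i, p i ↔ i ≠ v ∧ i ≠ w := ⟨_, fun _ => Iff.rfl⟩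
  have hz : p z := (hp z).2 ⟨hzv, hzw⟩
  rw [positionIntegral_induce_compl G hvw.symm hp hz _ rfl _ rfl,
    positionIntegral_induce_compl G hvw (fun i => (hp i).trans and_comm) hz _ rfl _ rfl]
  have hρ : Measurable fun x : FourSpace => ((‖x‖₊ ^ 8)⁻¹ : ℝ≥0) := by fun_prop
  have hmeas : Measurable fun y : {i // p i} → FourSpace =>
      shell (‖y ⟨z, hz⟩‖ ^ 2) * (ENNReal.ofReal (∏ e : G.edgeSet,
        deletedNormSq v (fun i => if h : p i then y ⟨i, h⟩ else 0) e))⁻¹ := by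
    have h1 := measurable_shell
    have h2 : ∀ e : Sym2 W, Measurable fun y : {i // p i} → FourSpace =>
        deletedNormSq v (fun i => if h : p i then y ⟨i, h⟩ else 0) e := fun e => by
      induction e with
      | _ i j =>
        simp only [deletedNormSq_mk]
        split_ifs <;> fun_prop
    have h3 : Measurable fun y : {i // p i} → FourSpace => ∏ e : G.edgeSet,
        deletedNormSq v (fun i => if h : p i then y ⟨i, h⟩ else 0) e :=
      Finset.measurable_fun_prod _ fun e _ => h2 e
    fun_prop
  rw [volume_pi, lintegral_pi_comp_of_map_withDensity hρ measurable_unitInversion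
    map_unitInversion_volume hmeas]
  have hne : ∀ᵐ y : {i // p i} → FourSpace ∂Measure.pi (fun _ => volume), ∀ i, y i ≠ 0 :=
    ae_all_iff.2 fun i => (Measure.quasiMeasurePreserving_eval
      (fun _ : {i // p i} => (volume : Measure FourSpace)) i).ae
      (compl_mem_ae_iff.2 (measure_singleton (0 : FourSpace)))
  refine lintegral_congr_ae (hne.mono fun y hy => ?_)
  dsimp only
  rw [norm_unitInversion, inv_pow, shell_inv, mul_left_comm]
  congr 1
  have hext : (fun i => if h : p i then unitInversion (y ⟨i, h⟩) else 0) =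
      fun i => unitInversion (if h : p i then y ⟨i, h⟩ else 0) := funext fun i => by
    split_ifs
    · rfl
    · exact unitInversion_zero.symm
  have hid := prod_deletedNormSq_unitInversion_mul hdeg hvw hp
    (y := fun i => if h : p i then y ⟨i, h⟩ else 0) (by simp [hp]) (by simp [hp])
    (fun i hi => by simpa [hi] using hy ⟨i, hi⟩)
  rw [hext, ← hid, ENNReal.ofReal_mul (Finset.prod_nonneg fun e _ => deletedNormSq_nonneg _ _ _),
    ENNReal.mul_inv, mul_comm]
  · congr 1
    rw [ENNReal.ofReal_prod_of_nonneg fun i _ => pow_nonneg (norm_nonneg _) 8,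
      ENNReal.prod_inv_distrib fun i _ j _ _ => Or.inr ENNReal.ofReal_ne_top]
    refine Finset.prod_congr rfl fun i _ => ?_
    rw [ENNReal.coe_inv (pow_ne_zero 8 (nnnorm_ne_zero_iff.2 (hy i))),
      ENNReal.ofReal_pow (norm_nonneg _), ofReal_norm, ENNReal.coe_pow,
      dif_pos i.2]
    rfl
  · exact Or.inr ENNReal.ofReal_ne_top
  · exact Or.inl ENNReal.ofReal_ne_top

end Inversion

section Completion

open scoped ENNReal

theorem feynmanResidue_eq_toReal {V : Type*} [Fintype V] (G : SimpleGraph V) (e₀ : G.edgeSet) :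
    feynmanResidue G e₀ = (∫⁻ u, ENNReal.ofReal ((kirchhoff G (chart G e₀ u))⁻¹ ^ 2)
      ∂Measure.pi (fun _ : {e : G.edgeSet // e ≠ e₀} => volumePos)).toReal := by
  have hk : Continuous (kirchhoff G) := by
    unfold kirchhoff
    refine continuous_finsetSum _ fun T _ => continuous_finsetProd _ fun e _ => ?_
    split_ifs <;> fun_prop
  have hm : Measurable fun u => (kirchhoff G (chart G e₀ u))⁻¹ ^ 2 :=
    (hk.comp (continuous_chart G e₀)).measurable.inv.pow_const 2
  rw [feynmanResidue, pi_volumePos,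
    integral_eq_lintegral_of_nonneg_ae (Filter.Eventually.of_forall fun u => sq_nonneg _)
      hm.aestronglyMeasurable]

/-- Two residues agree as soon as the corresponding position-space integrals do. -/
theorem feynmanResidue_eq_of_positionIntegral_eq {V V' : Type*} [Fintype V] [Fintype V']
    {G : SimpleGraph V} {G' : SimpleGraph V'} (hG : G.Connected) (hG' : G'.Connected)
    (e₀ : G.edgeSet) (e₀' : G'.edgeSet) {n : ℕ}
    (hV : Fintype.card V = n + 1) (hV' : Fintype.card V' = n + 1)
    (hE : Fintype.card G.edgeSet = 2 * n) (hE' : Fintype.card G'.edgeSet = 2 * n)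
    {r : V} {z : {i : V // i ≠ r}} {r' : V'} {z' : {i : V' // i ≠ r'}}
    (h : positionIntegral G r z = positionIntegral G' r' z') :
    feynmanResidue G e₀ = feynmanResidue G' e₀' := by
  have hr : Fintype.card {i : V // i ≠ r} = n := by
    have := Fintype.card_subtype_compl (fun i => i = r)
    rw [Fintype.card_subtype_eq, hV] at this
    exact this
  have hr' : Fintype.card {i : V' // i ≠ r'} = n := by
    have := Fintype.card_subtype_compl (fun i => i = r')
    rw [Fintype.card_subtype_eq, hV'] at this
    exact this
  have he : Fintype.card {e : G.edgeSet // e ≠ e₀} + 1 = 2 * n := by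
    have := Fintype.card_subtype_compl (fun e => e = e₀)
    have hpos : 0 < Fintype.card G.edgeSet := Fintype.card_pos_iff.2 ⟨e₀⟩
    rw [Fintype.card_subtype_eq, hE] at this
    have h2 : Fintype.card {e : G.edgeSet // e ≠ e₀} = 2 * n - 1 := this
    omega
  have he' : Fintype.card {e : G'.edgeSet // e ≠ e₀'} + 1 = 2 * n := by
    have := Fintype.card_subtype_compl (fun e => e = e₀')
    have hpos : 0 < Fintype.card G'.edgeSet := Fintype.card_pos_iff.2 ⟨e₀'⟩
    rw [Fintype.card_subtype_eq, hE'] at this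
    have h2 : Fintype.card {e : G'.edgeSet // e ≠ e₀'} = 2 * n - 1 := this
    omega
  rw [positionIntegral_eq_shellMass_mul hG r z e₀ (by rw [he, hr]),
    positionIntegral_eq_shellMass_mul hG' r' z' e₀' (by rw [he', hr']), hr, hr',
    ENNReal.mul_right_inj shellMass_ne_zero shellMass_ne_top,
    ENNReal.mul_right_inj (pow_ne_zero n gaussianMass_ne_zero)
      (ENNReal.pow_ne_top gaussianMass_ne_top)] at h
  rw [feynmanResidue_eq_toReal, feynmanResidue_eq_toReal, h]

theorem card_edgeSet_induce_compl {W : Type*} [Fintype W] {G : SimpleGraph W}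
    (hdeg : ∀ i, G.degree i = 4) (v : W) {n : ℕ} (hn : Fintype.card ({v}ᶜ : Set W) = n + 1) :
    Fintype.card (G.induce ({v}ᶜ : Set W)).edgeSet = 2 * n := by
  have h1 := G.card_edgeFinset_induce_compl_singleton v
  have h2 := G.card_edgeFinset_deleteIncidenceSet v
  have h3 := G.sum_degrees_eq_twice_card_edges
  have h4 := Fintype.card_compl_set ({v} : Set W)
  rw [Finset.sum_congr rfl fun i _ => hdeg i, Finset.sum_const, Finset.card_univ, smul_eq_mul] at h3
  rw [hdeg] at h2
  rw [hn, Set.card_singleton] at h4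
  rw [← SimpleGraph.edgeFinset_card, h1, h2]
  omega

end Completion

/-- Completion invariance: if `Ĝ` is a connected 4-regular graph and `v`, `w`
are vertices whose vertex-deleted subgraphs are connected and have finite
Feynman residues, then those residues are equal. -/
theorem feynmanResidue_completion_invariance {W : Type*} [Fintype W]
    (Ghat : SimpleGraph W) (hconn : Ghat.Connected)
    (hdeg : ∀ w, Ghat.degree w = 4)
    (v w : W)
    (hv : (Ghat.induce ({v}ᶜ : Set W)).Connected)
    (hw : (Ghat.induce ({w}ᶜ : Set W)).Connected)
    (ev : (Ghat.induce ({v}ᶜ : Set W)).edgeSet)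
    (ew : (Ghat.induce ({w}ᶜ : Set W)).edgeSet)
    (hintv : IntegrableOn
      (fun u : {e : (Ghat.induce ({v}ᶜ : Set W)).edgeSet // e ≠ ev} → ℝ =>
        (kirchhoff (Ghat.induce ({v}ᶜ : Set W))
          (chart (Ghat.induce ({v}ᶜ : Set W)) ev u))⁻¹ ^ 2)
      {u | ∀ e, 0 < u e})
    (hintw : IntegrableOn
      (fun u : {e : (Ghat.induce ({w}ᶜ : Set W)).edgeSet // e ≠ ew} → ℝ =>
        (kirchhoff (Ghat.induce ({w}ᶜ : Set W))
          (chart (Ghat.induce ({w}ᶜ : Set W)) ew u))⁻¹ ^ 2)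
      {u | ∀ e, 0 < u e}) :
    feynmanResidue (Ghat.induce ({v}ᶜ : Set W)) ev =
      feynmanResidue (Ghat.induce ({w}ᶜ : Set W)) ew := by
  have hpos : 0 < Fintype.card W := Fintype.card_pos_iff.2 ⟨v⟩
  have hcard : ∀ x : W, Fintype.card ({x}ᶜ : Set W) = (Fintype.card W - 2) + 1 := by
    intro x
    have h1 := Fintype.card_compl_set ({x} : Set W)
    have h2 := Ghat.degree_lt_card_verts x
    rw [Set.card_singleton] at h1
    rw [hdeg] at h2
    omega
  by_cases hvw : v = w
  · subst hvw
    obtain ⟨r, z, hrz⟩ : ∃ r z, (Ghat.induce ({v}ᶜ : Set W)).Adj r z := by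
      obtain ⟨e, he⟩ := ev
      induction e with
      | _ i j => exact ⟨i, j, he⟩
    exact feynmanResidue_eq_of_positionIntegral_eq hv hv ev ew (hcard v) (hcard v)
      (card_edgeSet_induce_compl hdeg v (hcard v)) (card_edgeSet_induce_compl hdeg v (hcard v))
      (r := r) (z := ⟨z, hrz.ne'⟩) rfl
  · obtain ⟨z, hz, hzw⟩ : ∃ z ∈ Ghat.neighborFinset v, z ≠ w :=
      Finset.exists_mem_ne (by rw [Ghat.card_neighborFinset_eq_degree, hdeg]; norm_num) w
    have hzv : z ≠ v := ((Ghat.mem_neighborFinset v z).1 hz).ne'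
    exact feynmanResidue_eq_of_positionIntegral_eq hv hw ev ew (hcard v) (hcard w)
      (card_edgeSet_induce_compl hdeg v (hcard v)) (card_edgeSet_induce_compl hdeg w (hcard w))
      (positionIntegral_induce_compl_comm hdeg hvw hzv hzw)
end

section
/- Let G be a finite connected simple graph with |E| = 4k + 2 edges for an integer k ≥ 1, with cycle basis matrix C, graph Laplacian Λ_G, distinguished edge e₀, bijection ι, and canonical integrand f as defined. Then f is Lebesgue integrable on the positive orthant of functions u : E \ {e₀} → (0, ∞); in particular the canonical integral I_G(ω^{4k+1}) is finite. -/
open MeasureTheory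
open scoped Classical

/-- The value `φⁿ_X(V₁, …, V_n) = ∑_σ sign(σ)·tr((X⁻¹V_{σ(1)})⋯(X⁻¹V_{σ(n)}))`
of the bi-invariant form `ωⁿ_X = tr((X⁻¹ dX)ⁿ)` at `X` on tangent vectors
`V₁, …, V_n` (factorial-free convention). -/
noncomputable def phiForm {m : ℕ} (n : ℕ) (X : Matrix (Fin m) (Fin m) ℝ)
    (Vs : Fin n → Matrix (Fin m) (Fin m) ℝ) : ℝ :=
  ∑ σ : Equiv.Perm (Fin n),
    ((Equiv.Perm.sign σ : ℤ) : ℝ) *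
      (List.ofFn (fun i => X⁻¹ * Vs (σ i))).prod.trace

/-- The incidence matrix of an oriented graph with source map `src` and
target map `tgt`. -/
noncomputable def incidence {V : Type*} [Fintype V] (G : SimpleGraph V)
    (src tgt : G.edgeSet → V) : Matrix V G.edgeSet ℤ :=
  fun v e => (if v = tgt e then 1 else 0) - (if v = src e then 1 else 0)

/-- The graph Laplacian `Λ_G(x) = Cᵀ · diagonal(x) · C` associated to a cycle
basis matrix `C`. -/
noncomputable def graphLap {E : Type*} [Fintype E] {h : ℕ}
    (C : Matrix E (Fin h) ℤ) (x : E → ℝ) : Matrix (Fin h) (Fin h) ℝ :=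
  (C.map (Int.cast : ℤ → ℝ)).transpose * Matrix.diagonal x *
    C.map (Int.cast : ℤ → ℝ)

/-- The canonical integrand: the pullback to the affine chart `x(e₀) = 1` of
the canonical form `ω^{4k+1} = tr((Λ⁻¹ dΛ)^{4k+1})` on the cell of `G`. -/
noncomputable def canonicalIntegrand {V : Type*} [Fintype V]
    (G : SimpleGraph V) {h : ℕ} (C : Matrix G.edgeSet (Fin h) ℤ)
    (k : ℕ) (e₀ : G.edgeSet) (ι : Fin (4 * k + 1) ≃ {e : G.edgeSet // e ≠ e₀})
    (u : {e : G.edgeSet // e ≠ e₀} → ℝ) : ℝ :=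
  phiForm (4 * k + 1) (graphLap C (chart G e₀ u))
    (fun i => graphLap C (fun e => if e = (ι i : {e : G.edgeSet // e ≠ e₀}).val then 1 else 0))

/-- The alternating form `(M₁, …, Mₙ) ↦ ∑_σ sign(σ) · tr(M_{σ(1)} ⋯ M_{σ(n)})`. -/
noncomputable def altTrace (ν : Type*) [Fintype ν] [DecidableEq ν] (n : ℕ) :
    Matrix ν ν ℝ [⋀^Fin n]→ₗ[ℝ] ℝ :=
  MultilinearMap.alternatization
    ((Matrix.traceLinearMap ν ℝ ℝ).compMultilinearMap
      (MultilinearMap.mkPiAlgebraFin ℝ n (Matrix ν ν ℝ)))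

section altTrace

variable {ν : Type*} [Fintype ν] [DecidableEq ν]

theorem altTrace_apply {n : ℕ} (M : Fin n → Matrix ν ν ℝ) :
    altTrace ν n M = ∑ σ : Equiv.Perm (Fin n),
      ((Equiv.Perm.sign σ : ℤ) : ℝ) * (List.ofFn (fun i => M (σ i))).prod.trace := by
  simp only [altTrace, MultilinearMap.alternatization_apply]
  refine Finset.sum_congr rfl fun σ _ => ?_
  simp [Units.smul_def]

theorem altTrace_nonsing_inv_mul {n : ℕ} (X : Matrix ν ν ℝ) (M : Fin n → Matrix ν ν ℝ) :
    altTrace ν n (fun i => X⁻¹ * M i) =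
      X.det⁻¹ ^ n * altTrace ν n (fun i => X.adjugate * M i) := by
  have h := (altTrace ν n).map_smul_univ (fun _ => X.det⁻¹) fun i => X.adjugate * M i
  simpa [Matrix.inv_def, Ring.inverse_eq_inv'] using h

theorem trace_prod_ofFn_finRotate {n : ℕ} (M : Fin (n + 1) → Matrix ν ν ℝ) :
    (List.ofFn fun i => M (finRotate (n + 1) i)).prod.trace = (List.ofFn M).prod.trace := by
  rw [List.ofFn_succ', List.ofFn_succ (f := M)]
  simp only [List.concat_eq_append, List.prod_append, List.prod_cons, List.prod_nil, mul_one,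
    finRotate_last]
  rw [Matrix.trace_mul_comm]
  simp

theorem altTrace_eq_zero_of_eq_one {n : ℕ} (hn : Odd n) (hn' : 2 ≤ n)
    (M : Fin n → Matrix ν ν ℝ) (j : Fin n) (hj : M j = 1) : altTrace ν n M = 0 := by
  obtain ⟨m, rfl⟩ : ∃ m, n = m + 2 := ⟨n - 2, by omega⟩
  set T : Equiv.Perm (Fin (m + 2)) → ℝ := fun σ =>
    ((Equiv.Perm.sign σ : ℤ) : ℝ) * (List.ofFn (fun i => M (σ i))).prod.trace with hT
  set S : Fin (m + 2) → ℝ := fun p => ∑ σ : Equiv.Perm (Fin (m + 2)),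
    if σ p = j then T σ else 0 with hS
  have hrot : ∀ p, S (finRotate _ p) = S p := by
    intro p
    rw [hS]
    refine Fintype.sum_equiv (Equiv.mulRight (finRotate (m + 2))) _ _ fun σ => ?_
    have hsign : Equiv.Perm.sign (finRotate (m + 2)) = 1 := by
      rw [sign_finRotate]
      refine Even.neg_one_pow ?_
      rw [Nat.odd_add_one, Nat.not_odd_iff_even] at hn
      exact hn
    have := trace_prod_ofFn_finRotate fun i => M (σ i)
    simp only [Equiv.coe_mulRight, Equiv.Perm.mul_apply, hT, Equiv.Perm.sign_mul, hsign, mul_one,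
      this]
  have hswap : S 1 = -S 0 := by
    rw [hS, ← Finset.sum_neg_distrib]
    refine Fintype.sum_equiv (Equiv.mulRight (Equiv.swap 0 1)) _ _ fun σ => ?_
    simp only [Equiv.coe_mulRight, Equiv.Perm.mul_apply, Equiv.swap_apply_left]
    split_ifs with hσ
    · have h01 : (0 : Fin (m + 2)) ≠ 1 := by simp
      have hr : ∀ i : Fin m, Equiv.swap (0 : Fin (m + 2)) 1 i.succ.succ = i.succ.succ :=
        fun i => Equiv.swap_apply_of_ne_of_ne (by simp [Fin.ext_iff]) (by simp [Fin.ext_iff])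
      simp [hT, List.ofFn_succ, Equiv.Perm.sign_mul, Equiv.Perm.sign_swap h01, hr, hσ, hj]
    · simp
  have h0 : S 0 = 0 := by
    have := hrot 0
    simp only [finRotate_apply, zero_add] at this
    linarith
  have hall : ∀ p, S p = 0 := by
    intro p
    induction p using Fin.induction with
    | zero => exact h0
    | succ i ih =>
      have := hrot i.castSucc
      rw [finRotate_apply, Fin.coeSucc_eq_succ] at this
      rw [this, ih]
  rw [altTrace_apply]
  calc ∑ σ, T σ = ∑ σ, ∑ p, if σ p = j then T σ else 0 := by
        refine Finset.sum_congr rfl fun σ _ => ?_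
        simp [← Equiv.eq_symm_apply]
    _ = ∑ p, S p := Finset.sum_comm
    _ = 0 := by simp [hall]

theorem altTrace_update_eq_neg {E : Type*} [Fintype E] {n : ℕ} (hn : Odd n) (hn' : 2 ≤ n)
    {e₀ : E} (ι : Fin n ≃ {e : E // e ≠ e₀}) (N : E → Matrix ν ν ℝ) (hN : ∑ e, N e = 1)
    (j : Fin n) :
    altTrace ν n (fun i => N (Function.update (fun i => (ι i : E)) j e₀ i)) =
      -altTrace ν n (fun i => N (ι i)) := by
  have key := altTrace_eq_zero_of_eq_one hn hn' (Function.update (fun i => N (ι i)) j 1) j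
    (by simp)
  rw [← hN, AlternatingMap.map_update_sum, ← Fintype.sum_subtype_add_sum_subtype (· ≠ e₀),
    ← Equiv.sum_comp ι, Finset.sum_eq_single j] at key
  · have h2 : ∑ e : {e : E // ¬ e ≠ e₀}, altTrace ν n
        (Function.update (fun i => N (ι i)) j (N e)) =
        altTrace ν n (Function.update (fun i => N (ι i)) j (N e₀)) := by
      have : Unique {e : E // ¬ e ≠ e₀} :=
        ⟨⟨⟨e₀, by simp⟩⟩, fun e => Subtype.ext (not_not.mp e.2)⟩
      rw [Fintype.sum_unique, not_not.mp (default : {e : E // ¬ e ≠ e₀}).2]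
    rw [h2] at key
    have h3 : (fun i => N (Function.update (fun i => (ι i : E)) j e₀ i)) =
        Function.update (fun i => N (ι i)) j (N e₀) := by
      ext1 i
      by_cases hi : i = j
      · subst hi; simp
      · simp [hi]
    have h4 : Function.update (fun i => N (ι i)) j (N (ι j)) = fun i => N (ι i) :=
      Function.update_eq_self j (fun i => N (ι i))
    rw [h4] at key
    rw [h3]
    linarith
  · intro i _ hij
    refine AlternatingMap.map_eq_zero_of_eq _ _ (i := i) (j := j) ?_ hij
    simp [hij]
  · simp

theorem prod_ofFn_vecMulVec {n : ℕ} (a b : Fin (n + 1) → ν → ℝ) :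
    (List.ofFn fun i => Matrix.vecMulVec (a i) (b i)).prod =
      (∏ i : Fin n, b i.castSucc ⬝ᵥ a i.succ) • Matrix.vecMulVec (a 0) (b (Fin.last n)) := by
  induction n with
  | zero => simp
  | succ n ih =>
    rw [List.ofFn_succ, List.prod_cons, ih (fun i => a i.succ) (fun i => b i.succ),
      Fin.prod_univ_succ]
    simp only [Matrix.mul_smul, Matrix.vecMulVec_mul_vecMulVec, smul_smul, Fin.succ_last,
      Fin.castSucc_zero, Fin.succ_castSucc, Matrix.vecMulVec_smul, mul_comm]

theorem abs_trace_prod_ofFn_vecMulVec_le {n : ℕ} (a b : Fin (n + 1) → ν → ℝ)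
    (y : Fin (n + 1) → ℝ) {K : ℝ}
    (hab : ∀ i j, |b i ⬝ᵥ a j| ≤ K * Real.exp (-(|y i - y j| / 2))) (p q : Fin (n + 1)) :
    |(List.ofFn fun i => Matrix.vecMulVec (a i) (b i)).prod.trace| ≤
      K ^ (n + 1) * Real.exp (-(|y p - y q| / 2)) := by
  have hK : 0 ≤ K := by
    have := (abs_nonneg _).trans (hab p p)
    simpa using this
  rw [prod_ofFn_vecMulVec, Matrix.trace_smul, Matrix.trace_vecMulVec, smul_eq_mul, abs_mul,
    Finset.abs_prod, dotProduct_comm (a 0)]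
  have h1 : ∏ i : Fin n, |b i.castSucc ⬝ᵥ a i.succ| ≤
      K ^ n * Real.exp (-(|y p - y q| / 2)) := by
    have hpath : |y p - y q| ≤ ∑ i : Fin n, |y i.castSucc - y i.succ| := by
      wlog hpq : p ≤ q generalizing p q
      · rw [abs_sub_comm]
        exact this q p (le_of_not_ge hpq)
      set z : ℕ → ℝ := fun i => y (Fin.ofNat (n + 1) i) with hz
      have hzv : ∀ i : Fin (n + 1), z i = y i := fun i => by simp [hz]
      have hle := dist_le_Ico_sum_dist z (m := p) (n := q) hpq
      rw [hzv, hzv, Real.dist_eq] at hle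
      refine hle.trans ?_
      refine (Finset.sum_le_sum_of_subset_of_nonneg (t := Finset.range n) ?_
        fun _ _ _ => dist_nonneg).trans ?_
      · intro i hi
        simp only [Finset.mem_Ico, Finset.mem_range] at hi ⊢
        omega
      · rw [Finset.sum_range]
        refine (Finset.sum_congr rfl fun i _ => ?_).le
        rw [Real.dist_eq, ← hzv, ← hzv]
        simp
    calc ∏ i : Fin n, |b i.castSucc ⬝ᵥ a i.succ|
        ≤ ∏ i : Fin n, K * Real.exp (-(|y i.castSucc - y i.succ| / 2)) :=
          Finset.prod_le_prod (fun _ _ => abs_nonneg _) fun _ _ => hab _ _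
      _ = K ^ n * Real.exp (-((∑ i : Fin n, |y i.castSucc - y i.succ|) / 2)) := by
          rw [Finset.prod_mul_distrib, ← Real.exp_sum, Finset.sum_neg_distrib, Finset.sum_div]
          simp
      _ ≤ _ := by gcongr
  have h2 : |b (Fin.last n) ⬝ᵥ a 0| ≤ K := by
    refine (hab _ _).trans (mul_le_of_le_one_right hK ?_)
    rw [Real.exp_le_one_iff]
    have := abs_nonneg (y (Fin.last n) - y 0)
    linarith
  calc _ ≤ K ^ n * Real.exp (-(|y p - y q| / 2)) * K := by gcongr
    _ = _ := by ring

theorem abs_altTrace_vecMulVec_le {n : ℕ} (a b : Fin (n + 1) → ν → ℝ)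
    (y : Fin (n + 1) → ℝ) {K : ℝ}
    (hab : ∀ i j, |b i ⬝ᵥ a j| ≤ K * Real.exp (-(|y i - y j| / 2))) (p q : Fin (n + 1)) :
    |altTrace ν (n + 1) fun i => Matrix.vecMulVec (a i) (b i)| ≤
      (n + 1).factorial * (K ^ (n + 1) * Real.exp (-(|y p - y q| / 2))) := by
  rw [altTrace_apply]
  calc _ ≤ ∑ σ : Equiv.Perm (Fin (n + 1)), K ^ (n + 1) * Real.exp (-(|y p - y q| / 2)) := by
        refine (Finset.abs_sum_le_sum_abs _ _).trans (Finset.sum_le_sum fun σ _ => ?_)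
        have := abs_trace_prod_ofFn_vecMulVec_le (fun i => a (σ i)) (fun i => b (σ i))
          (fun i => y (σ i)) (fun i j => hab _ _) (σ.symm p) (σ.symm q)
        simp only [Equiv.apply_symm_apply] at this
        have hs : |((Equiv.Perm.sign σ : ℤ) : ℝ)| = 1 := by
          rcases Int.units_eq_one_or (Equiv.Perm.sign σ) with h | h <;> simp [h]
        rwa [abs_mul, hs, one_mul]
    _ = _ := by simp [Fintype.card_perm]

end altTrace

section WeightedLeastSquares

variable {E : Type*} [Fintype E]

theorem exists_norm_le_of_sign_cone (L : Submodule ℝ (E → ℝ)) (s : E → SignType) (e : E)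
    (hL : ∀ z ∈ L, (∀ i, (s i : ℝ) * z i = |z i|) → z e = 0 → z = 0) :
    ∃ K : ℝ, ∀ z ∈ L, (∀ i, (s i : ℝ) * z i = |z i|) → ‖z‖ ≤ K * |z e| := by
  set S : Set (E → ℝ) := Metric.sphere 0 1 ∩ ((L : Set (E → ℝ)) ∩
    {z | ∀ i, (s i : ℝ) * z i = |z i|}) with hS
  have hSc : IsCompact S := by
    refine (isCompact_sphere 0 1).inter_right (L.closed_of_finiteDimensional.inter ?_)
    simp only [Set.ofPred_forall]
    exact isClosed_iInter fun i => isClosed_eq (by fun_prop) (by fun_prop)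
  have hcont : ContinuousOn (fun z : E → ℝ => (z e)⁻¹) S := by
    refine ContinuousOn.inv₀ (by fun_prop) fun z hz h0 => ?_
    have := hL z hz.2.1 hz.2.2 h0
    simpa [this] using hz.1
  obtain ⟨K, hK⟩ := hSc.exists_bound_of_continuousOn hcont
  refine ⟨K, fun z hz hsz => ?_⟩
  by_cases h0 : z = 0
  · simp [h0]
  have hn : 0 < ‖z‖ := norm_pos_iff.mpr h0
  have hze : 0 < |z e| := abs_pos.mpr fun h => h0 (hL z hz hsz h)
  have := hK (‖z‖⁻¹ • z) ⟨by simp [norm_smul, hn.ne'], L.smul_mem _ hz, fun i => by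
    simp only [Pi.smul_apply, smul_eq_mul, abs_mul, ← hsz i, abs_of_pos (inv_pos.mpr hn)]
    ring⟩
  simp only [Pi.smul_apply, smul_eq_mul, Real.norm_eq_abs, abs_inv, abs_mul, mul_inv, abs_norm,
    inv_inv] at this
  rwa [← div_eq_mul_inv, div_le_iff₀ hze] at this

variable {ν : Type*} [Fintype ν] [DecidableEq ν] [DecidableEq E]

/-- Weighted least squares solutions are bounded uniformly in the positive weights. -/
theorem exists_bound_weighted_leastSquares (D : Matrix E ν ℝ) :
    ∃ K : ℝ, ∀ x : E → ℝ, (∀ e, 0 < x e) →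
      IsUnit (D.transpose * Matrix.diagonal x * D).det → ∀ e f,
        x e * |D f ⬝ᵥ ((D.transpose * Matrix.diagonal x * D)⁻¹).mulVec (D e)| ≤ K := by
  have h (s : E → SignType) (e : E) : ∃ K : ℝ,
      (∀ z ∈ LinearMap.range D.mulVecLin, (∀ i, (s i : ℝ) * z i = |z i|) → z e = 0 → z = 0) →
      ∀ z ∈ LinearMap.range D.mulVecLin, (∀ i, (s i : ℝ) * z i = |z i|) → ‖z‖ ≤ K * |z e| := by
    by_cases hs : ∀ z ∈ LinearMap.range D.mulVecLin,
        (∀ i, (s i : ℝ) * z i = |z i|) → z e = 0 → z = 0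
    · obtain ⟨K, hK⟩ := exists_norm_le_of_sign_cone _ s e hs
      exact ⟨K, fun _ => hK⟩
    · exact ⟨0, fun h => absurd h hs⟩
  choose K hK using h
  refine ⟨∑ s, ∑ e, |K s e|, fun x hx hu e f => ?_⟩
  set Λ := D.transpose * Matrix.diagonal x * D with hΛ
  set y : E → ℝ := D.mulVec (Λ⁻¹.mulVec (x e • D e)) with hy
  have hyL : y ∈ LinearMap.range D.mulVecLin := ⟨_, rfl⟩
  have orth : ∀ z ∈ LinearMap.range D.mulVecLin, ∑ i, x i * (y i * z i) = x e * z e := by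
    rintro _ ⟨w, rfl⟩
    have h1 : Λ.mulVec (Λ⁻¹.mulVec (x e • D e)) = x e • D e := by
      rw [Matrix.mulVec_mulVec, Matrix.mul_nonsing_inv _ hu, Matrix.one_mulVec]
    have h2 : w ⬝ᵥ Λ.mulVec (Λ⁻¹.mulVec (x e • D e)) = ∑ i, x i * (y i * (D.mulVec w) i) := by
      rw [hΛ, ← Matrix.mulVec_mulVec, ← Matrix.mulVec_mulVec, ← hΛ, ← hy,
        Matrix.dotProduct_mulVec, Matrix.vecMul_transpose]
      simp only [dotProduct, Matrix.mulVec_diagonal]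
      exact Finset.sum_congr rfl fun i _ => by ring
    rw [Matrix.mulVecLin_apply, ← h2, h1, dotProduct_smul, smul_eq_mul, dotProduct_comm]
    rfl
  have hye : |y e| ≤ 1 := by
    have h1 := orth y hyL
    have h2 : x e * (y e * y e) ≤ ∑ i, x i * (y i * y i) :=
      Finset.single_le_sum (f := fun i => x i * (y i * y i))
        (fun i _ => mul_nonneg (hx i).le (mul_self_nonneg _)) (Finset.mem_univ e)
    rw [h1] at h2
    have h3 := le_of_mul_le_mul_left h2 (hx e)
    rw [abs_le]
    constructor <;> nlinarith
  have hbound := hK (fun i => SignType.sign (y i)) e (by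
    intro z hz hsz hze
    have h1 := orth z hz
    have h2 : ∀ i, y i * z i = |y i| * |z i| := fun i => by
      rw [← hsz i]
      nth_rw 1 [← sign_mul_abs (y i)]
      ring
    rw [hze, mul_zero, Finset.sum_eq_zero_iff_of_nonneg (fun i _ => by
      rw [h2]; exact mul_nonneg (hx i).le (by positivity))] at h1
    funext i
    have h3 := h1 i (Finset.mem_univ i)
    have hsi := hsz i
    rcases mul_eq_zero.mp ((mul_eq_zero.mp h3).resolve_left (hx i).ne') with h | h
    · simpa [h] using hsi.symm
    · exact h) y hyL (fun i => by simp)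
  have hyf : x e * |D f ⬝ᵥ (Λ⁻¹).mulVec (D e)| = ‖y f‖ := by
    rw [hy, Real.norm_eq_abs, Matrix.mulVec_smul, Matrix.mulVec_smul, Pi.smul_apply, smul_eq_mul,
      abs_mul, abs_of_pos (hx e)]
    rfl
  rw [hyf]
  calc ‖y f‖ ≤ ‖y‖ := norm_le_pi_norm y f
    _ ≤ K (fun i => SignType.sign (y i)) e * |y e| := hbound
    _ ≤ |K (fun i => SignType.sign (y i)) e| * 1 := by
        gcongr
        exact le_abs_self _
    _ ≤ ∑ e', |K (fun i => SignType.sign (y i)) e'| := by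
        rw [mul_one]
        exact Finset.single_le_sum
          (f := fun e' => |K (fun i => SignType.sign (y i)) e'|)
          (fun _ _ => abs_nonneg _) (Finset.mem_univ e)
    _ ≤ _ := Finset.single_le_sum (f := fun s => ∑ e', |K s e'|)
          (fun _ _ => Finset.sum_nonneg fun _ _ => abs_nonneg _) (Finset.mem_univ _)

end WeightedLeastSquares

theorem transpose_mul_diagonal_mul_eq_sum {E ν : Type*} [Fintype E] [DecidableEq E]
    (D : Matrix E ν ℝ)
    (x : E → ℝ) :
    D.transpose * Matrix.diagonal x * D = ∑ e, x e • Matrix.vecMulVec (D e) (D e) := by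
  ext i j
  rw [Matrix.mul_apply, Matrix.sum_apply]
  simp only [Matrix.mul_diagonal, Matrix.transpose_apply, Matrix.smul_apply,
    Matrix.vecMulVec_apply, smul_eq_mul]
  exact Finset.sum_congr rfl fun e _ => by ring

section LaplacianBound

variable {E ν : Type*} [Fintype E] [DecidableEq E] [Fintype ν] [DecidableEq ν]

theorem exists_bound_altTrace_laplacian (D : Matrix E ν ℝ) {n : ℕ} (hn : Odd (n + 1))
    (hn' : 1 ≤ n) {e₀ : E} (ι : Fin (n + 1) ≃ {e : E // e ≠ e₀}) :
    ∃ K : ℝ, 0 ≤ K ∧ ∀ x : E → ℝ, (∀ e, 0 < x e) → x e₀ = 1 → ∀ p,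
      |altTrace ν (n + 1) fun i => x (ι i) •
        ((D.transpose * Matrix.diagonal x * D)⁻¹ * Matrix.vecMulVec (D (ι i)) (D (ι i)))| ≤
      K * Real.exp (-(|Real.log (x (ι p))| / 2)) := by
  obtain ⟨K, hK⟩ := exists_bound_weighted_leastSquares D
  refine ⟨(n + 1).factorial * (max K 0) ^ (n + 1), by positivity, fun x hx hx₀ p => ?_⟩
  set Λ := D.transpose * Matrix.diagonal x * D with hΛ
  by_cases hu : IsUnit Λ.det
  swap
  · rw [Matrix.nonsing_inv_apply_not_isUnit _ hu]
    simp only [zero_mul, smul_zero]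
    rw [AlternatingMap.map_coord_zero _ 0 rfl, abs_zero]
    positivity
  have hsymm : Λ⁻¹.transpose = Λ⁻¹ := by
    rw [Matrix.transpose_nonsing_inv, hΛ]
    simp [Matrix.mul_assoc]
  have hcomm (e f : E) : D f ⬝ᵥ Λ⁻¹.mulVec (D e) = D e ⬝ᵥ Λ⁻¹.mulVec (D f) := by
    rw [Matrix.dotProduct_mulVec, ← Matrix.mulVec_transpose, hsymm, dotProduct_comm]
  set y : E → ℝ := fun e => Real.log (x e) with hy
  set s : E → ℝ := fun e => Real.exp (y e / 2) with hs
  have hxy (e : E) : x e = Real.exp (y e) := (Real.exp_log (hx e)).symm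
  set a : E → ν → ℝ := fun e => s e • Λ⁻¹.mulVec (D e) with ha
  set b : E → ν → ℝ := fun e => s e • D e with hb
  set N : E → Matrix ν ν ℝ := fun e => Matrix.vecMulVec (a e) (b e) with hN
  have hNx (e : E) : x e • (Λ⁻¹ * Matrix.vecMulVec (D e) (D e)) = N e := by
    rw [hN, ha, hb]
    simp only [Matrix.mul_vecMulVec, Matrix.smul_vecMulVec, Matrix.vecMulVec_smul, smul_smul]
    rw [hxy, hs, ← Real.exp_add, add_halves]
  have hsum : ∑ e, N e = 1 := by
    simp only [← hNx, ← Matrix.mul_smul, ← Finset.mul_sum]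
    rw [← transpose_mul_diagonal_mul_eq_sum, Matrix.nonsing_inv_mul _ hu]
  have hab (e f : E) : |b e ⬝ᵥ a f| ≤ max K 0 * Real.exp (-(|y e - y f| / 2)) := by
    have aux (e f : E) : |b e ⬝ᵥ a f| ≤ max K 0 * Real.exp (-((y f - y e) / 2)) := by
      have h1 : |b e ⬝ᵥ a f| = x f * |D e ⬝ᵥ Λ⁻¹.mulVec (D f)| *
          Real.exp (-((y f - y e) / 2)) := by
        rw [ha, hb]
        simp only [dotProduct_smul, smul_dotProduct, smul_eq_mul, abs_mul, hs, Real.abs_exp,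
          hxy]
        rw [mul_right_comm, ← Real.exp_add, ← mul_assoc, ← Real.exp_add]
        ring_nf
      rw [h1]
      gcongr
      exact (hK x hx hu f e).trans (le_max_left _ _)
    rcases abs_cases (y e - y f) with ⟨h, -⟩ | ⟨h, -⟩ <;> rw [h]
    · have h2 := aux f e
      have h3 : b f ⬝ᵥ a e = b e ⬝ᵥ a f := by
        rw [ha, hb]
        simp only [dotProduct_smul, smul_dotProduct, smul_eq_mul, hcomm e f]
        ring
      rwa [h3] at h2
    · have h2 := aux e f
      rwa [neg_sub]
  have : Nontrivial (Fin (n + 1)) := Fin.nontrivial_iff_two_le.mpr (by omega)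
  obtain ⟨j, hj⟩ := exists_ne p
  simp only [hNx]
  rw [← abs_neg, ← altTrace_update_eq_neg hn (by omega) ι N hsum j]
  have := abs_altTrace_vecMulVec_le
    (fun i => a (Function.update (fun i => (ι i : E)) j e₀ i))
    (fun i => b (Function.update (fun i => (ι i : E)) j e₀ i))
    (fun i => y (Function.update (fun i => (ι i : E)) j e₀ i)) (K := max K 0)
    (fun i i' => hab _ _) p j
  have hy₀ : y e₀ = 0 := by simp [hy, hx₀]
  simpa [hj.symm, hy₀, mul_assoc] using this

theorem continuous_altTrace {X : Type*} [TopologicalSpace X] {n : ℕ}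
    {M : Fin n → X → Matrix ν ν ℝ} (hM : ∀ i, Continuous (M i)) :
    Continuous fun x => altTrace ν n fun i => M i x := by
  have hprod : ∀ {n : ℕ} {M : Fin n → X → Matrix ν ν ℝ}, (∀ i, Continuous (M i)) →
      Continuous fun x => (List.ofFn fun i => M i x).prod := by
    intro n
    induction n with
    | zero => intro M _; simpa using continuous_const
    | succ n ih =>
      intro M hM
      simp only [List.ofFn_succ, List.prod_cons]
      exact (hM 0).mul (ih fun i => hM i.succ)
  simp only [altTrace_apply]
  exact continuous_finsetSum _ fun σ _ =>
    continuous_const.mul (hprod fun i => hM (σ i)).matrix_trace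

end LaplacianBound

theorem integrableOn_inv_mul_exp_neg_abs_log {δ : ℝ} (hδ : 0 < δ) :
    IntegrableOn (fun t : ℝ => t⁻¹ * Real.exp (-(δ * |Real.log t|))) (Set.Ioi 0) := by
  rw [← Set.Ioc_union_Ioi_eq_Ioi zero_le_one]
  refine IntegrableOn.union ?_ ?_
  · have h := (intervalIntegrable_iff_integrableOn_Ioc_of_le zero_le_one).mp
      (intervalIntegral.intervalIntegrable_rpow' (a := 0) (b := 1) (r := δ - 1) (by linarith))
    refine h.congr_fun (fun t ht => ?_) measurableSet_Ioc
    dsimp only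
    rw [abs_of_nonpos (Real.log_nonpos ht.1.le ht.2), Real.rpow_sub_one ht.1.ne',
      Real.rpow_def_of_pos ht.1, div_eq_inv_mul]
    ring_nf
  · have h := integrableOn_Ioi_rpow_of_lt (a := -δ - 1) (by linarith) one_pos
    refine h.congr_fun (fun t ht => ?_) measurableSet_Ioi
    have ht0 : 0 < t := one_pos.trans ht
    dsimp only
    rw [abs_of_nonneg (Real.log_nonneg (le_of_lt ht)), Real.rpow_sub_one ht0.ne',
      Real.rpow_def_of_pos ht0, div_eq_inv_mul]
    ring_nf

theorem integrableOn_prod_inv_mul_exp_neg_abs_log {κ : Type*} [Fintype κ] {δ : ℝ} (hδ : 0 < δ) :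
    IntegrableOn (fun u : κ → ℝ => ∏ e, ((u e)⁻¹ * Real.exp (-(δ * |Real.log (u e)|))))
      {u | ∀ e, 0 < u e} := by
  have h : {u : κ → ℝ | ∀ e, 0 < u e} = Set.univ.pi fun _ => Set.Ioi 0 := by
    ext u; simp
  rw [IntegrableOn, h, volume_pi, Measure.restrict_pi_pi]
  exact Integrable.fintype_prod fun _ => integrableOn_inv_mul_exp_neg_abs_log hδ

theorem graphLap_eq {E : Type*} [Fintype E] [DecidableEq E] {h : ℕ} (C : Matrix E (Fin h) ℤ)
    (x : E → ℝ) :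
    graphLap C x = (C.map (Int.cast : ℤ → ℝ)).transpose * Matrix.diagonal x *
      C.map (Int.cast : ℤ → ℝ) := by
  unfold graphLap
  congr!

theorem graphLap_indicator {E : Type*} [Fintype E] {h : ℕ} (C : Matrix E (Fin h) ℤ) (e : E)
    [∀ e', Decidable (e' = e)] :
    graphLap C (fun e' => if e' = e then 1 else 0) =
      Matrix.vecMulVec (C.map (Int.cast : ℤ → ℝ) e) (C.map (Int.cast : ℤ → ℝ) e) := by
  rw [graphLap, transpose_mul_diagonal_mul_eq_sum, Finset.sum_eq_single e]
  · simp
  · intro e' _ he'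
    simp [he']
  · simp

theorem continuous_graphLap {E : Type*} [Fintype E] {h : ℕ} (C : Matrix E (Fin h) ℤ) :
    Continuous fun x => graphLap C x :=
  (continuous_const.matrix_mul continuous_id.matrix_diagonal).matrix_mul continuous_const

section CanonicalIntegrand

variable {V : Type*} [Fintype V] (G : SimpleGraph V) {h : ℕ} (C : Matrix G.edgeSet (Fin h) ℤ)
  (k : ℕ) (e₀ : G.edgeSet) (ι : Fin (4 * k + 1) ≃ {e : G.edgeSet // e ≠ e₀})

theorem canonicalIntegrand_eq_altTrace (u : {e : G.edgeSet // e ≠ e₀} → ℝ) :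
    canonicalIntegrand G C k e₀ ι u = altTrace (Fin h) (4 * k + 1) fun i =>
      (graphLap C (chart G e₀ u))⁻¹ * Matrix.vecMulVec (C.map (Int.cast : ℤ → ℝ) (ι i))
        (C.map (Int.cast : ℤ → ℝ) (ι i)) := by
  simp only [canonicalIntegrand, phiForm, graphLap_indicator, altTrace_apply]

theorem measurable_canonicalIntegrand : Measurable (canonicalIntegrand G C k e₀ ι) := by
  have hchart : Continuous fun u => chart G e₀ u := by
    refine continuous_pi fun e => ?_
    by_cases he : e = e₀
    · simpa [chart, he] using continuous_const
    · simpa [chart, he] using continuous_apply _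
  have hlap : Continuous fun u => graphLap C (chart G e₀ u) :=
    (continuous_graphLap C).comp hchart
  have heq : canonicalIntegrand G C k e₀ ι = fun u =>
      (graphLap C (chart G e₀ u)).det⁻¹ ^ (4 * k + 1) *
        altTrace (Fin h) (4 * k + 1) fun i => (graphLap C (chart G e₀ u)).adjugate *
          Matrix.vecMulVec (C.map (Int.cast : ℤ → ℝ) (ι i))
            (C.map (Int.cast : ℤ → ℝ) (ι i)) := by
    funext u
    rw [canonicalIntegrand_eq_altTrace, altTrace_nonsing_inv_mul]
  rw [heq]
  refine (hlap.matrix_det.measurable.inv.pow_const _).mul ?_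
  exact (continuous_altTrace fun i =>
    hlap.matrix_adjugate.matrix_mul continuous_const).measurable

theorem exists_bound_canonicalIntegrand (hk : 1 ≤ k) :
    ∃ K : ℝ, ∀ u : {e : G.edgeSet // e ≠ e₀} → ℝ, (∀ e, 0 < u e) →
      |canonicalIntegrand G C k e₀ ι u| ≤ K * ∏ e, ((u e)⁻¹ *
        Real.exp (-((1 / (2 * (4 * k + 1 : ℝ))) * |Real.log (u e)|))) := by
  obtain ⟨K, hK0, hK⟩ := exists_bound_altTrace_laplacian (C.map (Int.cast : ℤ → ℝ))
    (n := 4 * k) ⟨2 * k, by ring⟩ (by omega) ι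
  refine ⟨K, fun u hu => ?_⟩
  have hchart (e : {e : G.edgeSet // e ≠ e₀}) : chart G e₀ u e = u e := by
    simp [chart, e.2]
  have hpos (e : G.edgeSet) : 0 < chart G e₀ u e := by
    by_cases he : e = e₀
    · simp [chart, he]
    · simpa [chart, he] using hu _
  obtain ⟨p, hp⟩ := Finite.exists_max fun i => |Real.log (u (ι i))|
  have hbound := hK (chart G e₀ u) hpos (by simp [chart]) p
  rw [AlternatingMap.map_smul_univ, ← graphLap_eq] at hbound
  simp only [hchart] at hbound
  have hprod : 0 < ∏ e, u e := Finset.prod_pos fun e _ => hu e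
  rw [Equiv.prod_comp ι u, smul_eq_mul, abs_mul, abs_of_pos hprod] at hbound
  rw [canonicalIntegrand_eq_altTrace, Finset.prod_mul_distrib, Finset.prod_inv_distrib,
    mul_left_comm, ← div_eq_inv_mul, le_div_iff₀' hprod, ← Real.exp_sum]
  refine hbound.trans ?_
  gcongr
  have hsum : ∑ e, |Real.log (u e)| ≤ (4 * k + 1 : ℝ) * |Real.log (u (ι p))| := by
    rw [← Equiv.sum_comp ι]
    refine (Finset.sum_le_sum fun i _ => hp i).trans ?_
    simp
  rw [Finset.sum_neg_distrib, ← Finset.mul_sum, neg_le_neg_iff, one_div_mul_eq_div,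
    div_le_iff₀ (by positivity)]
  linarith

end CanonicalIntegrand

/-- The canonical integral `I_G(ω^{4k+1})` is finite: the canonical integrand
is Lebesgue integrable on the positive orthant. -/
theorem canonicalIntegrand_integrableOn
    {V : Type*} [Fintype V] (G : SimpleGraph V) (hG : G.Connected)
    (src tgt : G.edgeSet → V)
    (hor : ∀ e : G.edgeSet, (e : Sym2 V) = s(src e, tgt e))
    (k : ℕ) (hk : 1 ≤ k)
    (hE : Fintype.card G.edgeSet = 4 * k + 2)
    (h : ℕ)
    (hh : (h : ℤ) = (Fintype.card G.edgeSet : ℤ) - Fintype.card V + 1)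
    (C : Matrix G.edgeSet (Fin h) ℤ)
    (hinj : Function.Injective C.mulVecLin)
    (hker : LinearMap.range C.mulVecLin =
      LinearMap.ker (incidence G src tgt).mulVecLin)
    (e₀ : G.edgeSet) (ι : Fin (4 * k + 1) ≃ {e : G.edgeSet // e ≠ e₀}) :
    IntegrableOn (canonicalIntegrand G C k e₀ ι) {u | ∀ e, 0 < u e} := by
  obtain ⟨K, hK⟩ := exists_bound_canonicalIntegrand G C k e₀ ι hk
  refine Integrable.mono' ((integrableOn_prod_inv_mul_exp_neg_abs_log
    (δ := 1 / (2 * (4 * k + 1 : ℝ))) (by positivity)).const_mul K)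
    (measurable_canonicalIntegrand G C k e₀ ι).aestronglyMeasurable ?_
  have hmeas : MeasurableSet {u : {e : G.edgeSet // e ≠ e₀} → ℝ | ∀ e, 0 < u e} := by
    simp only [Set.ofPred_forall]
    exact MeasurableSet.iInter fun e => measurableSet_lt measurable_const (measurable_pi_apply e)
  exact (ae_restrict_iff' hmeas).mpr (ae_of_all _ hK)
end
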